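/- arXiv:1809.03965 — 2 statements merged into one kernel-verified Lean document; each statement's English description precedes it below -/
import Mathlib

section
/- Let F be a field, A a central division algebra over F of dimension 64 (degree 8) such that A is isomorphic to its opposite algebra Aᵒᵖ as an F-algebra (exponent 2). Let K ⊆ A be a subfield that is a separable quadratic field extension of F, and let B be the centralizer of K in A (a central simple K-algebra of dimension 16 over K). If there exists a central simple F-algebra B₀ such that B ≅ B₀ ⊗_F K as K-algebras, then there exist quaternion F-algebras Q₁, Q₂, Q₃ (central simple F-algebras of dimension 4) such that A ≅ Q₁ ⊗_F Q₂ ⊗_F Q₃ as F-algebras. -/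
/-!
The descent `B₀` embeds in `A` as a central subalgebra `S` of dimension 16, so `A = S ⊗ Q₃`, where
`Q₃`, the centralizer of `S`, is a quaternion algebra (`tensor_cent_equiv`). An anti-automorphism
of `A` can be composed with an inner automorphism so that it inverts the canonical involution of
`Q₃`; it then preserves `Q₃` and its centralizer `S`. Hence `S` is a division algebra of degree
four with an anti-automorphism, and Albert's theorem (`albert`) splits it as `Q₁ ⊗ Q₂`.

The structure theory of a finite-dimensional central division algebra `D` (dimension of a
centralizer, double centralizer theorem, Skolem–Noether) is derived from the bijectivity of
`(xᵢ) ↦ (s ↦ ∑ xᵢ s bᵢ)` onto the linear maps `S → D`, where the `bᵢ` form a basis of `D` over the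
centralizer of the subalgebra `S`.

Albert's theorem, in every characteristic, has two parts.

* A separable quadratic subfield exists (`exists_sepQuad`). A separable non-scalar `x` has degree
  2 or 4. In degree 4, make the anti-automorphism `φ` fix `x`; then `φ²` is conjugation by some
  `g ∈ F(x)` with `g²` scalar. Either `F(g)` is the desired field, or `φ` is an involution. In the
  latter case some conjugate `ψ` of `φ` and some non-scalar `d` satisfy `ψ d = 1 - d`, and one of
  `d`, `d² - d`, `d²` generates a separable quadratic extension.
* A separable quadratic subfield `F(θ)` lies in a quaternion subalgebra
  (`IsSepQuad.exists_quatPair`). Make `φ` restrict to the canonical involution of the centralizer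
  of `F(θ)`, a quaternion algebra over `F(θ)`. If conjugation by `y` induces the nontrivial
  automorphism of `F(θ)`, then `y φ(y)` commutes with that centralizer, hence lies in `F(θ)`, and
  so does the square of `y + φ(y)`. Thus `θ` and `y + φ(y)` (or `y`, if this sum vanishes)
  generate a quaternion algebra.
-/

open scoped TensorProduct
open Module

/-- A quaternion algebra over `L`: a central simple `L`-algebra of dimension 4. -/
def IsQuaternionAlgebra (L A : Type) [Field L] [Ring A] [Algebra L A] : Prop :=
  Algebra.IsCentral L A ∧ IsSimpleRing A ∧ Module.finrank L A = 4

namespace AlbertDecomposition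

/-! ### Centralizers in central division algebras -/

lemma exists_inverse {D : Type*} [Ring D] [IsDomain D] (F : Type*) [Field F] [Algebra F D]
    [FiniteDimensional F D] {x : D} (hx : x ≠ 0) : ∃ y : D, x * y = 1 ∧ y * x = 1 := by
  obtain ⟨u, rfl⟩ := FiniteDimensional.isUnit F hx
  exact ⟨↑u⁻¹, by simp, by simp⟩

section General

variable {F D : Type*} [Field F] [Ring D] [IsDomain D] [Algebra F D] [FiniteDimensional F D]

variable (F) in
/-- The centralizer of a subalgebra, again as a subalgebra. -/
abbrev cent (S : Subalgebra F D) : Subalgebra F D := Subalgebra.centralizer F (S : Set D)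

omit [IsDomain D] [FiniteDimensional F D] in
lemma mem_cent {S : Subalgebra F D} {z : D} : z ∈ cent F S ↔ ∀ g ∈ S, g * z = z * g :=
  Subalgebra.mem_centralizer_iff F

/-- If the `b i` are left linearly independent over the centralizer of `S`, the map
`s ↦ ∑ i, x i * s * b i` on `S` determines the coefficients `x i`; proved by shortening a minimal
relation, as in Artin's lemma on characters. -/
lemma coeff_eq_zero {ι : Type*} [Fintype ι] (S : Subalgebra F D) (b : ι → D)
    (hb : ∀ c : ι → D, (∀ i, c i ∈ cent F S) → ∑ i, c i * b i = 0 → ∀ i, c i = 0)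
    (x : ι → D) (hx : ∀ s ∈ S, ∑ i, x i * s * b i = 0) : ∀ i, x i = 0 := by
  classical
  induction hn : (Finset.univ.filter (fun i => x i ≠ 0)).card using Nat.strong_induction_on
    generalizing x with
  | _ n ih =>
  by_contra! hne
  obtain ⟨j, hj⟩ := hne
  obtain ⟨v, -, hv⟩ := exists_inverse F hj
  have key : ∀ s ∈ S, ∀ i, v * x i * s - s * (v * x i) = 0 := by
    intro s hs
    refine ih _ ?_ (fun i => v * x i * s - s * (v * x i)) ?_ rfl
    · rw [← hn]
      refine Finset.card_lt_card ⟨?_, ?_⟩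
      · intro i hi
        simp only [Finset.mem_filter, Finset.mem_univ, true_and] at hi ⊢
        intro h0
        simp [h0] at hi
      · intro h
        have := h (show j ∈ _ by simpa using hj)
        simp [hv] at this
    · intro t ht
      have h1 := hx (s * t) (S.mul_mem hs ht)
      have h2 := hx t ht
      have : ∑ i, (v * x i * s - s * (v * x i)) * t * b i
          = v * ∑ i, x i * (s * t) * b i - s * (v * ∑ i, x i * t * b i) := by
        simp only [Finset.mul_sum, ← Finset.sum_sub_distrib]
        refine Finset.sum_congr rfl fun i _ => ?_
        noncomm_ring
      rw [this, h1, h2]; simp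
  have := hb (fun i => v * x i) (fun i => mem_cent.2 fun s hs => (sub_eq_zero.1 (key s hs i)).symm)
    (by
      have h1 := hx 1 S.one_mem
      have : ∑ i, v * x i * b i = v * ∑ i, x i * 1 * b i := by
        simp [Finset.mul_sum, mul_assoc]
      rw [this, h1, mul_zero]) j
  simp [hv] at this

lemma exists_cent_basis (S : Subalgebra F D) : ∃ (n : ℕ) (b : Fin n → D),
    (∀ c : Fin n → D, (∀ i, c i ∈ cent F S) → ∑ i, c i * b i = 0 → ∀ i, c i = 0) ∧
    (∀ d : D, ∃ c : Fin n → D, (∀ i, c i ∈ cent F S) ∧ d = ∑ i, c i * b i) ∧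
    finrank F (cent F S) * n = finrank F D := by
  let _ : DivisionRing (cent F S) := divisionRingOfFiniteDimensional F (cent F S)
  have : Module.Finite (cent F S) D := Module.Finite.of_restrictScalars_finite F _ _
  let b := Module.finBasis (cent F S) D
  refine ⟨_, b, ?_, ?_, Module.finrank_mul_finrank F (cent F S) D⟩
  · intro c hc h0 i
    have := Fintype.linearIndependent_iff.1 b.linearIndependent (fun i => ⟨c i, hc i⟩)
      (by simpa [Subalgebra.smul_def] using h0) i
    simpa using congrArg Subtype.val this
  · intro d
    refine ⟨fun i => (b.repr d i : D), fun i => (b.repr d i).2, ?_⟩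
    conv_lhs => rw [← b.sum_repr d]
    simp [Subalgebra.smul_def]

/-- The `F`-linear map attaching to a coefficient family `x` the map `s ↦ ∑ i, x i * s * b i`. -/
noncomputable def sandwich {ι : Type*} [Fintype ι] (S : Subalgebra F D) (b : ι → D) :
    (ι → D) →ₗ[F] (S →ₗ[F] D) where
  toFun x :=
    { toFun := fun s => ∑ i, x i * s * b i
      map_add' := by intro s t; simp [mul_add, add_mul, Finset.sum_add_distrib]
      map_smul' := by intro r s; simp [Finset.smul_sum] }
  map_add' := by intro x y; ext s; simp [add_mul, Finset.sum_add_distrib]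
  map_smul' := by intro r x; ext s; simp [Finset.smul_sum]

omit [IsDomain D] [FiniteDimensional F D] in
@[simp] lemma sandwich_apply {ι : Type*} [Fintype ι] (S : Subalgebra F D) (b : ι → D)
    (x : ι → D) (s : S) : sandwich S b x s = ∑ i, x i * s * b i := rfl

lemma sandwich_injective {ι : Type*} [Fintype ι] (S : Subalgebra F D) (b : ι → D)
    (hb : ∀ c : ι → D, (∀ i, c i ∈ cent F S) → ∑ i, c i * b i = 0 → ∀ i, c i = 0) :
    Function.Injective (sandwich S b) := by
  rw [injective_iff_map_eq_zero]
  intro x hx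
  funext i
  exact coeff_eq_zero S b hb x (fun s hs => by simpa using LinearMap.congr_fun hx ⟨s, hs⟩) i

variable [Algebra.IsCentral F D]

omit [IsDomain D] [FiniteDimensional F D] in
lemma exists_of_comm {x : D} (h : ∀ y, y * x = x * y) : ∃ r : F, x = algebraMap F D r :=
  (Algebra.IsCentral.mem_center_iff F).1 (Subalgebra.mem_center_iff.2 h)

/-- Every `F`-linear endomorphism of `D` is a sum of maps `t ↦ a t c`. -/
lemma exists_sandwich_end (f : D →ₗ[F] D) : ∃ (n : ℕ) (a c : Fin n → D),
    ∀ t, f t = ∑ i, a i * t * c i := by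
  let b := Module.finBasis F D
  have hinj : Function.Injective (sandwich (⊤ : Subalgebra F D) b) := by
    refine sandwich_injective _ _ fun c hc h0 => ?_
    have hc' : ∀ i, ∃ r : F, c i = algebraMap F D r := fun i =>
      exists_of_comm fun y => mem_cent.1 (hc i) y trivial
    choose r hr using hc'
    have := Fintype.linearIndependent_iff.1 b.linearIndependent r
      (by simpa [hr, Algebra.smul_def] using h0)
    intro i; rw [hr, this i, map_zero]
  have hsurj : Function.Surjective (sandwich (⊤ : Subalgebra F D) b) := by
    refine (LinearMap.injective_iff_surjective_of_finrank_eq_finrank ?_).1 hinj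
    rw [Module.finrank_linearMap, Module.finrank_pi_fintype]
    have : finrank F (⊤ : Subalgebra F D) = finrank F D :=
      Subalgebra.topEquiv.toLinearEquiv.finrank_eq
    rw [this]
    simp
  obtain ⟨x, hx⟩ := hsurj (f ∘ₗ (⊤ : Subalgebra F D).val.toLinearMap)
  exact ⟨_, x, b, fun t => by simpa using (LinearMap.congr_fun hx ⟨t, trivial⟩).symm⟩

lemma sandwich_surjective {n : ℕ} (S : Subalgebra F D) (b : Fin n → D)
    (hb : ∀ d : D, ∃ c : Fin n → D, (∀ i, c i ∈ cent F S) ∧ d = ∑ i, c i * b i) :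
    Function.Surjective (sandwich S b) := by
  intro f
  obtain ⟨g, hg⟩ := LinearMap.exists_extend (p := Subalgebra.toSubmodule S) f
  obtain ⟨m, a, c, hac⟩ := exists_sandwich_end g
  choose γ hγ hγ' using fun k => hb (c k)
  refine ⟨fun i => ∑ k, a k * γ k i, ?_⟩
  ext s
  have h1 : f s = g s := by rw [← hg]; rfl
  rw [h1, hac, sandwich_apply]
  simp only [Finset.sum_mul]
  rw [Finset.sum_comm]
  refine Finset.sum_congr rfl fun k _ => ?_
  conv_rhs => rw [hγ' k]
  rw [Finset.mul_sum]
  refine Finset.sum_congr rfl fun i _ => ?_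
  have := mem_cent.1 (hγ k i) s s.2
  rw [mul_assoc (a k), ← this]
  noncomm_ring

theorem finrank_mul_finrank_cent (S : Subalgebra F D) :
    finrank F S * finrank F (cent F S) = finrank F D := by
  obtain ⟨n, b, hb1, hb2, hn⟩ := exists_cent_basis S
  have e := (LinearEquiv.ofBijective (sandwich S b)
    ⟨sandwich_injective S b hb1, sandwich_surjective S b hb2⟩).finrank_eq
  rw [Module.finrank_linearMap, Module.finrank_pi_fintype] at e
  simp only [Finset.sum_const, Finset.card_univ, Fintype.card_fin, smul_eq_mul] at e
  have : n = finrank F S := Nat.eq_of_mul_eq_mul_right Module.finrank_pos e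
  rw [← this, mul_comm, hn]

/-- Skolem–Noether for a subalgebra of a central division algebra. -/
theorem skolem_noether (S : Subalgebra F D) (f : S →ₐ[F] D) :
    ∃ a : D, a ≠ 0 ∧ ∀ s : S, a * s = f s * a := by
  obtain ⟨n, b, hb1, hb2, hn⟩ := exists_cent_basis S
  obtain ⟨x, hx⟩ := sandwich_surjective S b hb2 f.toLinearMap
  have hx' : ∀ s : S, f s = ∑ i, x i * s * b i := fun s => by
    rw [← sandwich_apply, hx]; rfl
  have hne : ∃ i, x i ≠ 0 := by
    by_contra! h
    have := hx' 1
    simp [h] at this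
  obtain ⟨i, hi⟩ := hne
  refine ⟨x i, hi, fun s => sub_eq_zero.1 ?_⟩
  refine coeff_eq_zero S b hb1 (fun i => x i * s - f s * x i) (fun t ht => ?_) i
  have h1 := hx' (s * ⟨t, ht⟩)
  rw [map_mul, hx' ⟨t, ht⟩, Finset.mul_sum] at h1
  simp only [sub_mul, Finset.sum_sub_distrib]
  rw [sub_eq_zero]
  simpa [mul_assoc] using h1.symm

omit [IsDomain D] [FiniteDimensional F D] [Algebra.IsCentral F D] in
lemma le_cent_cent (S : Subalgebra F D) : S ≤ cent F (cent F S) := fun s hs =>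
  mem_cent.2 fun _ hg => ((mem_cent.1 hg) s hs).symm

theorem cent_cent (S : Subalgebra F D) : cent F (cent F S) = S := by
  refine (Subalgebra.eq_of_le_of_finrank_eq (le_cent_cent S) ?_).symm
  have h1 := finrank_mul_finrank_cent S
  have h2 := finrank_mul_finrank_cent (cent F S)
  rw [mul_comm, ← h1, mul_comm (finrank F S)] at h2
  exact (Nat.eq_of_mul_eq_mul_left Module.finrank_pos (by rw [← h2, mul_comm])).symm

omit [IsDomain D] [FiniteDimensional F D] [Algebra.IsCentral F D] in
lemma isCentral_iff (S : Subalgebra F D) :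
    Algebra.IsCentral F S ↔ ∀ x ∈ S, x ∈ cent F S → ∃ r : F, x = algebraMap F D r := by
  constructor
  · intro h x hx hxc
    obtain ⟨r, hr⟩ := (Algebra.IsCentral.mem_center_iff F (x := (⟨x, hx⟩ : S))).1
      (Subalgebra.mem_center_iff.2 fun y => Subtype.ext (mem_cent.1 hxc y y.2))
    exact ⟨r, congrArg Subtype.val hr⟩
  · intro h
    refine ⟨fun x hx => ?_⟩
    obtain ⟨r, hr⟩ := h x x.2 (mem_cent.2 fun g hg =>
      congrArg Subtype.val (Subalgebra.mem_center_iff.1 hx ⟨g, hg⟩))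
    exact Algebra.mem_bot.2 ⟨r, Subtype.ext hr.symm⟩

lemma isCentral_cent (S : Subalgebra F D) (hS : Algebra.IsCentral F S) :
    Algebra.IsCentral F (cent F S) := by
  rw [isCentral_iff] at hS ⊢
  intro x hx hxc
  rw [cent_cent] at hxc
  exact hS x hxc hx

/-- A central subalgebra splits off as a tensor factor: the subalgebra generated by `S` and its
centralizer has centralizer `F`, hence is everything by the double centralizer theorem. -/
theorem tensor_cent_equiv (S : Subalgebra F D) (hS : Algebra.IsCentral F S) :
    Nonempty ((S ⊗[F] cent F S) ≃ₐ[F] D) := by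
  let m : (S ⊗[F] cent F S) →ₐ[F] D := Algebra.TensorProduct.lift S.val (cent F S).val
    fun x y => mem_cent.1 y.2 x x.2
  have hm : ∀ (x : S) (y : cent F S), m (x ⊗ₜ y) = x * y := fun x y =>
    Algebra.TensorProduct.lift_tmul _ _ _ x y
  have hrange : m.range = ⊤ := by
    have h1 : S ≤ m.range := fun s hs => ⟨(⟨s, hs⟩ : S) ⊗ₜ 1, by
      have := hm ⟨s, hs⟩ 1
      simpa using this⟩
    have h2 : cent F S ≤ m.range := fun s hs => ⟨1 ⊗ₜ (⟨s, hs⟩ : cent F S), by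
      have := hm 1 ⟨s, hs⟩
      simpa using this⟩
    rw [← cent_cent m.range, eq_top_iff]
    intro d _
    refine mem_cent.2 fun g hg => ?_
    have hg1 : g ∈ cent F S := mem_cent.2 fun s hs => mem_cent.1 hg s (h1 hs)
    have hg2 : g ∈ S := by
      rw [← cent_cent S]
      exact mem_cent.2 fun s hs => mem_cent.1 hg s (h2 hs)
    obtain ⟨r, rfl⟩ := (isCentral_iff S).1 hS g hg2 hg1
    exact Algebra.commutes r d
  have hsurj : Function.Surjective m := AlgHom.range_eq_top m |>.1 hrange
  have hinj : Function.Injective m :=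
    (LinearMap.injective_iff_surjective_of_finrank_eq_finrank (f := m.toLinearMap)
      (by rw [Module.finrank_tensorProduct, finrank_mul_finrank_cent])).2 hsurj
  exact ⟨AlgEquiv.ofBijective m ⟨hinj, hsurj⟩⟩

end General

/-! ### Separable quadratic elements and quaternion subalgebras -/

section Quadratic

variable {F D : Type*} [Field F] [Ring D] [Algebra F D]

/-- `θ` is a non-scalar root of `X² - p X + q` that differs from its conjugate `p - θ`; in a
domain this says that `F(θ)` is a separable quadratic extension of `F`. -/
structure IsSepQuad (θ : D) (p q : F) : Prop where
  not_scalar : ∀ r : F, θ ≠ r • 1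
  sq : θ * θ = p • θ - q • 1
  conj_ne : p • 1 - θ ≠ θ

lemma coeff_eq_zero_of_not_scalar {θ : D} (hθ : ∀ r : F, θ ≠ r • 1) {a c : F}
    (h : a • θ = c • (1 : D)) : a = 0 := by
  by_contra ha
  refine hθ (a⁻¹ * c) ?_
  rw [mul_smul, ← h, smul_smul, inv_mul_cancel₀ ha, one_smul]

lemma mem_adjoin_quad {θ : D} {p q : F} (sq : θ * θ = p • θ - q • 1) {x : D} :
    x ∈ Algebra.adjoin F {θ} ↔ ∃ a b : F, x = a • 1 + b • θ := by
  constructor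
  · intro hx
    induction hx using Algebra.adjoin_induction with
    | mem x hx => exact ⟨0, 1, by simpa using hx⟩
    | algebraMap r => exact ⟨r, 0, by simp [Algebra.algebraMap_eq_smul_one]⟩
    | add x y _ _ hx hy =>
      obtain ⟨a, b, rfl⟩ := hx
      obtain ⟨c, d, rfl⟩ := hy
      exact ⟨a + c, b + d, by module⟩
    | mul x y _ _ hx hy =>
      obtain ⟨a, b, rfl⟩ := hx
      obtain ⟨c, d, rfl⟩ := hy
      refine ⟨a * c - b * d * q, a * d + b * c + b * d * p, ?_⟩
      simp only [mul_add, add_mul, smul_mul_smul_comm, mul_one, one_mul, sq]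
      module
  · rintro ⟨a, b, rfl⟩
    exact add_mem (Subalgebra.smul_mem _ (one_mem _) _)
      (Subalgebra.smul_mem _ (Algebra.self_mem_adjoin_singleton F θ) _)

lemma IsSepQuad.finrank_adjoin {θ : D} {p q : F} [Nontrivial D] (h : IsSepQuad θ p q) :
    finrank F (Algebra.adjoin F {θ}) = 2 := by
  have hli : LinearIndependent F ![(1 : D), θ] := by
    rw [LinearIndependent.pair_iff]
    intro s t hst
    have ht : t = 0 := coeff_eq_zero_of_not_scalar h.not_scalar (c := -s)
      (by rw [neg_smul]; exact eq_neg_of_add_eq_zero_right hst)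
    subst ht
    simpa using hst
  have hspan : Subalgebra.toSubmodule (Algebra.adjoin F {θ})
      = Submodule.span F (Set.range ![(1 : D), θ]) := by
    ext x
    rw [Subalgebra.mem_toSubmodule, mem_adjoin_quad h.sq]
    simp only [Matrix.range_cons, Matrix.range_empty, Set.union_empty, Set.singleton_union,
      Submodule.mem_span_pair]
    exact exists_congr fun a => exists_congr fun b => eq_comm
  have := finrank_span_eq_card hli
  rw [← hspan] at this
  simpa using this

lemma commutator_mul {θ : D} {p q : F} (sq : θ * θ = p • θ - q • 1) (d : D) :
    (d * θ - θ * d) * θ = (p • 1 - θ) * (d * θ - θ * d) := by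
  have e1 : (d * θ - θ * d) * θ = d * (θ * θ) - θ * d * θ := by noncomm_ring
  have e2 : (p • 1 - θ) * (d * θ - θ * d)
      = p • (d * θ) - p • (θ * d) - θ * d * θ + θ * θ * d := by
    simp only [sub_mul, mul_sub, smul_mul_assoc, one_mul, mul_assoc]
    abel
  rw [e1, e2, sq]
  simp only [mul_sub, sub_mul, smul_mul_assoc, mul_smul_comm, one_mul, mul_one]
  abel

lemma comm_of_conj_of_conj {θ y z : D} {p : F} (hy : y * θ = (p • 1 - θ) * y)
    (hz : z * θ = (p • 1 - θ) * z) : θ * (y * z) = y * z * θ := by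
  have e : y * (p • 1 - θ) = θ * y := by
    rw [mul_sub, hy, sub_mul, mul_smul_comm, smul_mul_assoc, mul_one, one_mul]
    abel
  rw [mul_assoc, hz, ← mul_assoc, ← mul_assoc, e]

variable [IsDomain D]

/-- Generators of a quaternion algebra in the form `F(θ) ⊕ F(θ) y`. -/
structure IsQuatPair (θ y : D) (p q r : F) : Prop extends IsSepQuad θ p q where
  ne_zero : y ≠ 0
  conj : y * θ = (p • 1 - θ) * y
  sq_right : y * y = r • 1

namespace IsQuatPair

variable {θ y : D} {p q r : F}

lemma not_comm (h : IsQuatPair θ y p q r) : θ * y ≠ y * θ := by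
  intro e
  rw [h.conj] at e
  exact h.conj_ne (mul_right_cancel₀ h.ne_zero e).symm

lemma right_coeff_eq_zero (h : IsQuatPair θ y p q r) {c d : F}
    (hc : θ * ((c • 1 + d • θ) * y) = ((c • 1 + d • θ) * y) * θ) : c = 0 ∧ d = 0 := by
  by_cases hβ : c • (1 : D) + d • θ = 0
  · have hd : d = 0 := coeff_eq_zero_of_not_scalar h.not_scalar (c := -c)
      (by rw [neg_smul]; exact eq_neg_of_add_eq_zero_right hβ)
    subst hd
    simpa using hβ
  · have hcomm : θ * (c • (1 : D) + d • θ) = (c • (1 : D) + d • θ) * θ := by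
      simp [mul_add, add_mul]
    rw [← mul_assoc, hcomm, mul_assoc, mul_assoc] at hc
    exact absurd (mul_left_cancel₀ hβ hc) h.not_comm

/-- The structure constants of `F⟨θ, y⟩`, in Mathlib's convention `i * i = c₁ + c₂ i`. -/
def basis (h : IsQuatPair θ y p q r) : QuaternionAlgebra.Basis D (-q) p r where
  i := θ
  j := y
  k := θ * y
  i_mul_i := by rw [h.sq]; module
  j_mul_j := h.sq_right
  i_mul_j := rfl
  j_mul_i := by rw [h.conj, sub_mul, smul_mul_assoc, one_mul]

omit [IsDomain D] in
lemma lift_eq (h : IsQuatPair θ y p q r) (x : QuaternionAlgebra F (-q) p r) :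
    h.basis.liftHom x = (x.re • 1 + x.imI • θ) + (x.imJ • 1 + x.imK • θ) * y := by
  change h.basis.lift x = _
  simp only [QuaternionAlgebra.Basis.lift, basis, Algebra.algebraMap_eq_smul_one, add_mul,
    smul_mul_assoc, one_mul]
  abel

lemma liftHom_injective (h : IsQuatPair θ y p q r) : Function.Injective h.basis.liftHom := by
  rw [injective_iff_map_eq_zero]
  intro x hx
  rw [h.lift_eq] at hx
  have e : (x.imJ • 1 + x.imK • θ) * y = -(x.re • 1 + x.imI • θ) :=
    eq_neg_of_add_eq_zero_right hx
  obtain ⟨h1, h2⟩ := h.right_coeff_eq_zero (c := x.imJ) (d := x.imK) (by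
    rw [e]; simp [mul_add, add_mul])
  simp only [h1, h2, zero_smul, add_zero, zero_mul] at hx
  have h3 : x.imI = 0 := coeff_eq_zero_of_not_scalar h.not_scalar (c := -x.re)
    (by rw [neg_smul]; exact eq_neg_of_add_eq_zero_right hx)
  have h4 : x.re = 0 := by simpa [h3] using hx
  ext <;> simp [*]

theorem exists_subalgebra (h : IsQuatPair θ y p q r) :
    ∃ S : Subalgebra F D, finrank F S = 4 ∧ Algebra.IsCentral F S := by
  refine ⟨h.basis.liftHom.range, ?_, ?_⟩
  · rw [← (AlgEquiv.ofInjective _ h.liftHom_injective).toLinearEquiv.finrank_eq,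
      QuaternionAlgebra.finrank_eq_four]
  · rw [isCentral_iff]
    rintro _ ⟨x, rfl⟩ hx
    have hθ : θ ∈ h.basis.liftHom.range := ⟨⟨0, 1, 0, 0⟩, by
      change h.basis.liftHom _ = _
      simp [h.lift_eq]⟩
    have hy : y ∈ h.basis.liftHom.range := ⟨⟨0, 0, 1, 0⟩, by
      change h.basis.liftHom _ = _
      simp [h.lift_eq]⟩
    have c1 := mem_cent.1 hx θ hθ
    have c2 := mem_cent.1 hx y hy
    change θ * h.basis.liftHom x = h.basis.liftHom x * θ at c1
    change y * h.basis.liftHom x = h.basis.liftHom x * y at c2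
    change ∃ r : F, h.basis.liftHom x = _
    rw [h.lift_eq] at c1 c2 ⊢
    have hcomm : θ * (x.re • (1 : D) + x.imI • θ) = (x.re • (1 : D) + x.imI • θ) * θ := by
      simp [mul_add, add_mul]
    rw [mul_add, add_mul _ _ θ, hcomm, add_right_inj] at c1
    obtain ⟨h1, h2⟩ := h.right_coeff_eq_zero c1
    simp only [h1, h2, zero_smul, add_zero, zero_mul, mul_add, add_mul, mul_smul_comm,
      smul_mul_assoc, mul_one, one_mul, add_right_inj] at c2 ⊢
    have h3 : x.imI = 0 := by
      by_contra h3
      exact h.not_comm (smul_right_injective D h3 c2).symm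
    exact ⟨x.re, by simp [h3, Algebra.algebraMap_eq_smul_one]⟩

end IsQuatPair

/-- If `y` conjugates `θ` to `p - θ` and `y²` lies in `F(θ)`, then `y²` is a scalar, being fixed
under conjugation by `y`. -/
lemma IsSepQuad.quatPair {θ y : D} {p q : F} (h : IsSepQuad θ p q) (hy : y ≠ 0)
    (hc : y * θ = (p • 1 - θ) * y) (hsq : y * y ∈ Algebra.adjoin F {θ}) :
    ∃ r, IsQuatPair θ y p q r := by
  obtain ⟨a, b, hab⟩ := (mem_adjoin_quad h.sq).1 hsq
  have h1 : y * (y * y) = (y * y) * y := (mul_assoc _ _ _).symm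
  rw [hab, mul_add, add_mul, mul_smul_comm, smul_mul_assoc, mul_one, one_mul, add_right_inj,
    mul_smul_comm, smul_mul_assoc, hc] at h1
  have hb : b = 0 := by
    by_contra hb
    exact h.conj_ne (mul_right_cancel₀ hy (smul_right_injective D hb h1))
  exact ⟨a, h, hy, hc, by rw [hab, hb]; simp⟩

variable [FiniteDimensional F D] [Algebra.IsCentral F D]

omit [IsDomain D] [FiniteDimensional F D] in
lemma IsSepQuad.exists_conj {θ : D} {p q : F} (h : IsSepQuad θ p q) :
    ∃ y : D, y ≠ 0 ∧ y * θ = (p • 1 - θ) * y := by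
  have : ∃ d : D, d * θ - θ * d ≠ 0 := by
    by_contra! hcon
    obtain ⟨r, hr⟩ := exists_of_comm (F := F) fun y => sub_eq_zero.1 (hcon y)
    exact h.not_scalar r (by rw [hr, Algebra.algebraMap_eq_smul_one])
  obtain ⟨d, hd⟩ := this
  exact ⟨_, hd, commutator_mul h.sq d⟩

omit [IsDomain D] [FiniteDimensional F D] [Algebra.IsCentral F D] in
lemma finrank_adjoin (x : D) : finrank F (Algebra.adjoin F {x}) = (minpoly F x).natDegree := by
  rw [← finrank_quotient_span_eq_natDegree (K := F), Algebra.adjoin_singleton_eq_range_aeval]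
  have e := Ideal.quotientKerAlgEquivOfSurjective
    (AlgHom.rangeRestrict_surjective (Polynomial.aeval x : Polynomial F →ₐ[F] D))
  rw [← e.toLinearEquiv.finrank_eq]
  have hk : RingHom.ker (Polynomial.aeval x : Polynomial F →ₐ[F] D).rangeRestrict
      = Ideal.span {minpoly F x} := by
    rw [AlgHom.ker_rangeRestrict]
    exact minpoly.ker_aeval_eq_span_minpoly F x
  exact (Ideal.quotientEquivAlgOfEq F hk).toLinearEquiv.finrank_eq

/-- A commutative subalgebra lies in its own centralizer, which bounds the degree of an
element by the square root of the dimension. -/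
lemma exists_degree_mul (x : D) : ∃ k, (minpoly F x).natDegree * k = finrank F D ∧
    (minpoly F x).natDegree ≤ k := by
  refine ⟨_, by rw [← finrank_adjoin, finrank_mul_finrank_cent], ?_⟩
  rw [← finrank_adjoin]
  have hle : Algebra.adjoin F {x} ≤ cent F (Algebra.adjoin F {x}) := fun a ha =>
    mem_cent.2 fun b hb => congrArg Subtype.val
      (mul_comm (⟨b, hb⟩ : Algebra.adjoin F {x}) ⟨a, ha⟩)
  exact LinearMap.finrank_le_finrank_of_injective (f := (Subalgebra.inclusion hle).toLinearMap)
    (Subalgebra.inclusion_injective hle)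

omit [Algebra.IsCentral F D] [IsDomain D] in
lemma sq_of_degree_two {x : D} (hx : (minpoly F x).natDegree = 2) :
    x * x = (-(minpoly F x).coeff 1) • x - (minpoly F x).coeff 0 • 1 := by
  have h := minpoly.aeval F x
  have hm := (minpoly.monic (Algebra.IsIntegral.isIntegral (R := F) x)).coeff_natDegree
  rw [hx] at hm
  rw [Polynomial.aeval_eq_sum_range, hx] at h
  simp only [Finset.sum_range_succ, Finset.sum_range_zero, hm] at h
  simp only [pow_zero, pow_one, one_smul, zero_add] at h
  rw [pow_two] at h
  rw [eq_neg_of_add_eq_zero_right h]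
  module

omit [Algebra.IsCentral F D] in
lemma isSepQuad_of_separable {x : D} (hx : (minpoly F x).natDegree = 2)
    (hns : ∀ r : F, x ≠ r • 1) (hs : IsSeparable F x) : ∃ p q : F, IsSepQuad x p q := by
  refine ⟨_, _, hns, sq_of_degree_two hx, fun h => ?_⟩
  have h2 : (2 : F) • x = (-(minpoly F x).coeff 1) • (1 : D) := by
    rw [two_smul]; nth_rewrite 1 [← h]; abel
  have h0 := coeff_eq_zero_of_not_scalar hns h2
  have h1 : (minpoly F x).coeff 1 = 0 := by
    rw [h0, zero_smul] at h2
    simpa using h2.symm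
  have hd : (minpoly F x).derivative = 0 := by
    ext n
    rw [Polynomial.coeff_derivative, Polynomial.coeff_zero]
    rcases n with _ | _ | n
    · simp [h1]
    · simp [one_add_one_eq_two, h0]
    · rw [Polynomial.coeff_eq_zero_of_natDegree_lt (by omega), zero_mul]
  have : IsUnit (minpoly F x) := by
    have := hs
    rw [IsSeparable, Polynomial.separable_def, hd, isCoprime_zero_right] at this
    exact this
  exact minpoly.not_isUnit F x this

lemma exists_separable (h : finrank F D ≠ 1) :
    ∃ x : D, (∀ r : F, x ≠ r • 1) ∧ IsSeparable F x := by
  let _ : DivisionRing D := divisionRingOfFiniteDimensional F D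
  obtain ⟨x, hx, hs⟩ := JacobsonNoether.exists_separable_and_not_isCentral' (L := F) (D := D)
    (fun e => h (Subalgebra.bot_eq_top_iff_finrank_eq_one.1 e))
  exact ⟨x, fun r hr => hx (Algebra.mem_bot.2 ⟨r, by rw [hr, Algebra.algebraMap_eq_smul_one]⟩), hs⟩

omit [Algebra.IsCentral F D] [FiniteDimensional F D] in
lemma degree_ne_one {x : D} (hns : ∀ r : F, x ≠ r • 1) : (minpoly F x).natDegree ≠ 1 := by
  intro h
  obtain ⟨r, hr⟩ := minpoly.natDegree_eq_one_iff.1 h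
  exact hns r (by rw [← hr, Algebra.algebraMap_eq_smul_one])

/-- The canonical involution of a quaternion division algebra. -/
theorem exists_bar (h4 : finrank F D = 4) : ∃ bar : D →ₗ[F] D,
    bar 1 = 1 ∧ (∀ x y, bar (x * y) = bar y * bar x) ∧ (∀ x, bar (bar x) = x) ∧
    (∀ x, ∃ t : F, x + bar x = t • 1) ∧ (∀ x, ∃ n : F, x * bar x = n • 1) := by
  obtain ⟨θ, hns, hs⟩ := exists_separable (F := F) (D := D) (by omega)
  have hdeg : (minpoly F θ).natDegree = 2 := by
    obtain ⟨k, hk, hle⟩ := exists_degree_mul (F := F) θ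
    have := degree_ne_one hns
    have h3 : (minpoly F θ).natDegree ≤ 2 := by nlinarith
    have : 0 < (minpoly F θ).natDegree := Nat.pos_of_ne_zero (by rintro e; simp [e] at hk; omega)
    omega
  obtain ⟨p, q, hθ⟩ := isSepQuad_of_separable hdeg hns hs
  obtain ⟨y, hy, hc⟩ := hθ.exists_conj
  have hcent : cent F (Algebra.adjoin F {θ}) = Algebra.adjoin F {θ} := by
    refine (Subalgebra.eq_of_le_of_finrank_eq (fun a ha => mem_cent.2 fun b hb =>
      congrArg Subtype.val (mul_comm (⟨b, hb⟩ : Algebra.adjoin F {θ}) ⟨a, ha⟩)) ?_).symm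
    have := finrank_mul_finrank_cent (Algebra.adjoin F {θ})
    rw [hθ.finrank_adjoin] at this ⊢
    omega
  have hc2 : θ * (y * y) = y * y * θ := comm_of_conj_of_conj hc hc
  have hsq : y * y ∈ Algebra.adjoin F {θ} := by
    rw [← hcent]
    refine mem_cent.2 fun g hg => ?_
    obtain ⟨a, b, rfl⟩ := (mem_adjoin_quad hθ.sq).1 hg
    simp [add_mul, mul_add, hc2]
  obtain ⟨r, h⟩ := hθ.quatPair hy hc hsq
  have hsurj : Function.Surjective h.basis.liftHom :=
    (LinearMap.injective_iff_surjective_of_finrank_eq_finrank (f := h.basis.liftHom.toLinearMap)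
      (by rw [QuaternionAlgebra.finrank_eq_four, h4])).1 h.liftHom_injective
  let e := AlgEquiv.ofBijective h.basis.liftHom ⟨h.liftHom_injective, hsurj⟩
  have hcoe : ∀ t : F, e (t : QuaternionAlgebra F (-q) p r) = t • 1 := fun t => by
    rw [← Algebra.algebraMap_eq_smul_one]
    exact e.commutes t
  refine ⟨{ toFun := fun x => e (star (e.symm x)), map_add' := ?_, map_smul' := ?_ },
    ?_, ?_, ?_, ?_, ?_⟩
  · intro x y; simp
  · intro s x; simp [QuaternionAlgebra.star_smul]
  · simp
  · intro x y; simp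
  · intro x; simp
  · intro x
    obtain ⟨x, rfl⟩ := e.surjective x
    refine ⟨2 * x.re + p * x.imI, ?_⟩
    rw [← hcoe, ← QuaternionAlgebra.self_add_star' x]
    simp
  · intro x
    obtain ⟨x, rfl⟩ := e.surjective x
    refine ⟨(x * star x).re, ?_⟩
    rw [← hcoe, ← QuaternionAlgebra.mul_star_eq_coe x]
    simp

end Quadratic

/-! ### Anti-automorphisms -/

section Anti

variable {F D : Type*} [Field F] [Ring D] [Algebra F D]

/-- `φ` reverses products and fixes `1`. On a finite-dimensional division algebra such a linear
map is automatically bijective, hence an anti-automorphism. -/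
structure IsAnti (φ : D →ₗ[F] D) : Prop where
  map_one : φ 1 = 1
  map_mul : ∀ x y, φ (x * y) = φ y * φ x

namespace IsAnti

variable {φ : D →ₗ[F] D}

lemma conj (h : IsAnti φ) {a a' : D} (h1 : a * a' = 1) (h2 : a' * a = 1) :
    ∃ φ₁ : D →ₗ[F] D, IsAnti φ₁ ∧ ∀ x, φ₁ x = a' * φ x * a := by
  refine ⟨LinearMap.mulRight F a ∘ₗ LinearMap.mulLeft F a' ∘ₗ φ, ⟨?_, ?_⟩, fun x => by simp⟩
  · simp [h.map_one, h2]
  · intro x y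
    simp only [LinearMap.comp_apply, LinearMap.mulLeft_apply, LinearMap.mulRight_apply, h.map_mul]
    calc a' * (φ y * φ x) * a = a' * φ y * 1 * φ x * a := by noncomm_ring
      _ = a' * φ y * (a * a') * φ x * a := by rw [h1]
      _ = _ := by noncomm_ring

variable [IsDomain D] [FiniteDimensional F D]

lemma injective (h : IsAnti φ) : Function.Injective φ := by
  rw [injective_iff_map_eq_zero]
  intro x hx
  by_contra h0
  obtain ⟨y, h1, -⟩ := exists_inverse F h0
  have := h.map_mul x y
  rw [h1, hx, mul_zero, h.map_one] at this
  exact one_ne_zero this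

lemma surjective (h : IsAnti φ) : Function.Surjective φ :=
  LinearMap.injective_iff_surjective.1 h.injective

variable [Algebra.IsCentral F D]

/-- By Skolem–Noether an anti-automorphism can be modified so as to invert a prescribed
anti-homomorphism `β` on a subalgebra. -/
lemma adjust (h : IsAnti φ) (S : Subalgebra F D) (β : S →ₗ[F] D) (h1 : β 1 = 1)
    (hβ : ∀ s t, β (s * t) = β t * β s) :
    ∃ φ₁ : D →ₗ[F] D, IsAnti φ₁ ∧ ∀ s : S, φ₁ (β s) = s := by
  let f : S →ₐ[F] D := AlgHom.ofLinearMap (φ ∘ₗ β) (by simp [h1, h.map_one])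
    (fun s t => by simp [hβ, h.map_mul])
  obtain ⟨a, ha, haf⟩ := skolem_noether S f
  obtain ⟨a', e1, e2⟩ := exists_inverse F ha
  obtain ⟨φ₁, h₁, e⟩ := h.conj e1 e2
  refine ⟨φ₁, h₁, fun s => ?_⟩
  have e3 : a * s = φ (β s) * a := haf s
  rw [e, mul_assoc, ← e3, ← mul_assoc, e2, one_mul]

lemma adjust_comm (h : IsAnti φ) (S : Subalgebra F D) (hS : ∀ s ∈ S, ∀ t ∈ S, s * t = t * s) :
    ∃ φ₁ : D →ₗ[F] D, IsAnti φ₁ ∧ ∀ s ∈ S, φ₁ s = s := by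
  obtain ⟨φ₁, h₁, e⟩ := h.adjust S S.val.toLinearMap rfl (fun s t => hS s s.2 t t.2)
  exact ⟨φ₁, h₁, fun s hs => e ⟨s, hs⟩⟩

end IsAnti

/-! ### Degree-four division algebras with an anti-automorphism -/

variable [IsDomain D] [FiniteDimensional F D]

omit [IsDomain D] [FiniteDimensional F D] in
lemma adjoin_comm (x : D) : ∀ s ∈ Algebra.adjoin F {x}, ∀ t ∈ Algebra.adjoin F {x},
    s * t = t * s := fun s hs t ht =>
  congrArg Subtype.val (mul_comm (⟨s, hs⟩ : Algebra.adjoin F {x}) ⟨t, ht⟩)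

lemma isSeparable_of_mem_adjoin {x g : D} (hx : IsSeparable F x)
    (hg : g ∈ Algebra.adjoin F {x}) : IsSeparable F g := by
  let S := Algebra.adjoin F {x}
  let _ : Field S := fieldOfFiniteDimensional F S
  let x' : S := ⟨x, Algebra.self_mem_adjoin_singleton F x⟩
  have hval : Function.Injective S.val := Subtype.val_injective
  have hx' : IsSeparable F x' := by
    unfold IsSeparable at hx ⊢
    rwa [← minpoly.algHom_eq S.val hval x']
  have := (IntermediateField.isSeparable_adjoin_simple_iff_isSeparable F S).2 hx'
  have key : ∀ y (hy : y ∈ Algebra.adjoin F {x}),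
      (⟨y, hy⟩ : S) ∈ IntermediateField.adjoin F {x'} := by
    intro y hy
    induction hy using Algebra.adjoin_induction with
    | mem y hy =>
      obtain rfl := hy
      exact IntermediateField.mem_adjoin_simple_self F x'
    | algebraMap r => exact (IntermediateField.adjoin F {x'}).algebraMap_mem r
    | add y z _ _ hy hz => exact add_mem hy hz
    | mul y z _ _ hy hz => exact mul_mem hy hz
  have h1 : IsSeparable F (⟨_, key g hg⟩ : IntermediateField.adjoin F {x'}) :=
    Algebra.IsSeparable.isSeparable F _
  unfold IsSeparable at h1 ⊢
  rw [← minpoly.algHom_eq (IntermediateField.adjoin F {x'}).val Subtype.val_injective] at h1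
  rw [← minpoly.algHom_eq S.val hval] at h1
  exact h1

variable [Algebra.IsCentral F D]

lemma degree_two_or_four (h16 : finrank F D = 16) {x : D} (hns : ∀ r : F, x ≠ r • 1) :
    (minpoly F x).natDegree = 2 ∨ (minpoly F x).natDegree = 4 := by
  obtain ⟨k, hk, hle⟩ := exists_degree_mul (F := F) x
  have := degree_ne_one hns
  have h3 : (minpoly F x).natDegree ≤ 4 := by nlinarith
  interval_cases (minpoly F x).natDegree <;> omega

lemma pow_four_eq (h16 : finrank F D = 16) {x : D} (hns : ∀ r : F, x ≠ r • 1) :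
    ∃ a b c e : F, x ^ 4 = a • 1 + b • x + c • x ^ 2 + e • x ^ 3 := by
  have hm := minpoly.monic (Algebra.IsIntegral.isIntegral (R := F) x)
  have h0 := minpoly.aeval F x
  rcases degree_two_or_four h16 hns with h | h
  · have hl := hm.coeff_natDegree
    rw [Polynomial.aeval_eq_sum_range, h] at h0
    rw [h] at hl
    simp only [Finset.sum_range_succ, Finset.sum_range_zero, hl] at h0
    generalize (minpoly F x).coeff 0 = u at h0
    generalize (minpoly F x).coeff 1 = v at h0
    refine ⟨0, 0, -u, -v, ?_⟩
    have h2 : x ^ 2 = (-u) • 1 + (-v) • x := by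
      rw [← sub_eq_zero, ← h0]
      simp
      abel
    calc x ^ 4 = x ^ 2 * x ^ 2 := by noncomm_ring
      _ = ((-u) • 1 + (-v) • x) * x ^ 2 := by rw [← h2]
      _ = _ := by
        rw [add_mul, smul_mul_assoc, smul_mul_assoc, one_mul, ← pow_succ']
        simp
  · have hl := hm.coeff_natDegree
    rw [Polynomial.aeval_eq_sum_range, h] at h0
    rw [h] at hl
    simp only [Finset.sum_range_succ, Finset.sum_range_zero, hl] at h0
    generalize (minpoly F x).coeff 0 = u at h0
    generalize (minpoly F x).coeff 1 = v at h0
    generalize (minpoly F x).coeff 2 = w at h0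
    generalize (minpoly F x).coeff 3 = z at h0
    refine ⟨-u, -v, -w, -z, ?_⟩
    rw [← sub_eq_zero, ← h0]
    simp
    abel

/-- An element `d` with `ψ d = 1 - d` yields a separable quadratic element: `d² - d` is fixed by
`ψ` while `d` is not, so it has degree at most two, and when it generates no separable quadratic
extension, `d` or `d²` does. -/
lemma exists_sepQuad_of_trace_one (h16 : finrank F D = 16) {ψ : D →ₗ[F] D} (hψ : IsAnti ψ)
    {d : D} (hd : ψ d = 1 - d) (hns : ∀ r : F, d ≠ r • 1) :
    ∃ (θ : D) (p q : F), IsSepQuad θ p q := by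
  have hne : 1 - d ≠ d := by
    intro e
    have e2 : (2 : F) • d = (1 : F) • 1 := by
      rw [one_smul, two_smul]; nth_rewrite 1 [← e]; abel
    have h2 := coeff_eq_zero_of_not_scalar hns e2
    rw [h2] at e2
    simp at e2
  by_cases hf : ∃ r : F, d * d - d = r • 1
  · obtain ⟨r, hr⟩ := hf
    refine ⟨d, 1, -r, hns, ?_, by rwa [one_smul]⟩
    rw [one_smul, neg_smul, ← hr]; abel
  push Not at hf
  set f := d * d - d with hfd
  have hψf : ψ f = f := by
    rw [hfd, map_sub, hψ.map_mul, hd]; noncomm_ring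
  have hcomm : f * d = d * f := by rw [hfd]; noncomm_ring
  obtain ⟨α, β, γ, δ, hff⟩ : ∃ α β γ δ : F, f * f = α • 1 + β • d + γ • f + δ • (f * d) := by
    obtain ⟨a, b, c, e, h4⟩ := pow_four_eq h16 hns
    have e1 : f * f = d ^ 4 - 2 • (d ^ 3) + d ^ 2 := by rw [hfd]; noncomm_ring
    have e2 : d ^ 2 = d + f := by rw [hfd]; noncomm_ring
    have e3 : d ^ 3 = d + f + f * d := by rw [hfd]; noncomm_ring
    refine ⟨a, b + c + e - 1, c + e - 1, e - 2, ?_⟩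
    rw [e1, h4, e3, e2]
    module
  have key : (β • 1 + δ • f) * (1 - d - d) = 0 := by
    have := congrArg ψ hff
    simp only [map_add, map_smul, hψ.map_mul, hψ.map_one, hψf, hd] at this
    rw [hff] at this
    have t : (β • 1 + δ • f) * (1 - d - d) = (α • 1 + β • (1 - d) + γ • f + δ • ((1 - d) * f))
      - (α • 1 + β • d + γ • f + δ • (f * d)) := by
      simp only [add_mul, smul_mul_assoc, mul_sub, sub_mul, one_mul, mul_one, ← hcomm, smul_sub]
      abel
    rw [t, ← this, sub_self]
  have hz : β • 1 + δ • f = 0 := by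
    rcases mul_eq_zero.1 key with h | h
    · exact h
    · exact absurd (sub_eq_zero.1 h) hne
  have hδ : δ = 0 := coeff_eq_zero_of_not_scalar hf (c := -β)
    (by rw [neg_smul]; exact eq_neg_of_add_eq_zero_right hz)
  have hβ : β = 0 := by simpa [hδ] using hz
  simp only [hδ, hβ, zero_smul, add_zero] at hff
  by_cases hcf : γ • 1 - f = f
  swap
  · exact ⟨f, γ, -α, hf, by rw [hff]; module, hcf⟩
  have e2 : (2 : F) • f = γ • 1 := by
    rw [two_smul]; nth_rewrite 1 [← hcf]; abel
  have h2 : (2 : F) = 0 := coeff_eq_zero_of_not_scalar hf e2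
  have hγ : γ = 0 := by
    rw [h2, zero_smul] at e2
    simpa using e2.symm
  have hD2 : ∀ x : D, x + x = 0 := fun x => by rw [← two_smul F x, h2, zero_smul]
  have hdd : d * d = d + f := by rw [hfd]; abel
  refine ⟨d * d, 1, -α, ?_, ?_, ?_⟩
  · intro r hr
    have := congrArg ψ hr
    rw [hψ.map_mul, hd, map_smul, hψ.map_one, ← hr] at this
    have e : (1 - d) * (1 - d) = 1 - (d + d) + d * d := by noncomm_ring
    rw [e, hD2] at this
    simp at this
  · have : d * d * (d * d) = d * d + f * f + (d * f + d * f) := by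
      rw [hdd]
      simp only [add_mul, mul_add, hcomm, hdd]
      abel
    rw [this, hD2, hff, hγ]
    module
  · intro e
    have : d * d + d * d = 1 := by
      nth_rewrite 1 [← e]; rw [one_smul]; abel
    rw [hD2] at this
    exact zero_ne_one this

/-- An involution produces an element `d` with `ψ d = 1 - d` for a conjugate `ψ` of the
involution: take `u = b - φ b ≠ 0` and `d = b u⁻¹`. -/
lemma exists_sepQuad_of_involution (h16 : finrank F D = 16) {φ : D →ₗ[F] D} (h : IsAnti φ)
    (hinv : ∀ x, φ (φ x) = x) : ∃ (θ : D) (p q : F), IsSepQuad θ p q := by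
  obtain ⟨b, hb⟩ : ∃ b, b - φ b ≠ 0 := by
    by_contra! hcon
    have hid : ∀ x, φ x = x := fun x => (sub_eq_zero.1 (hcon x)).symm
    have hc : ∀ x y : D, y * x = x * y := fun x y => by
      have := h.map_mul x y
      simp only [hid] at this
      exact this.symm
    obtain ⟨x, hx, -⟩ := exists_separable (F := F) (D := D) (by omega)
    obtain ⟨r, hr⟩ := exists_of_comm (F := F) (hc x)
    exact hx r (by rw [hr, Algebra.algebraMap_eq_smul_one])
  set u := b - φ b with hu
  have hφu : φ u = -u := by rw [hu, map_sub, hinv]; abel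
  obtain ⟨v, huv, hvu⟩ := exists_inverse F hb
  obtain ⟨ψ, hψ, hψe⟩ := h.conj hvu huv
  have hφv : φ v = -v := by
    have e : φ v * φ u = 1 := by rw [← h.map_mul, huv, h.map_one]
    rw [hφu] at e
    calc φ v = φ v * (u * v) := by rw [huv, mul_one]
      _ = -(φ v * -u) * v := by noncomm_ring
      _ = -v := by rw [e]; simp
  -- adding to `b` an element fixed by `φ` does not change `u`
  have key : ∀ b' : D, b' - φ b' = u → ψ (b' * v) = 1 - b' * v := by
    intro b' hb'
    have e1 : φ b' = b' - u := by rw [← hb']; abel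
    rw [hψe, h.map_mul, hφv, e1]
    calc u * (-v * (b' - u)) * v = -(u * v) * b' * v + (u * v) * (u * v) := by noncomm_ring
      _ = _ := by rw [huv]; noncomm_ring
  by_cases hs : ∃ r : F, b * v = r • 1
  · obtain ⟨r, hr⟩ := hs
    refine exists_sepQuad_of_trace_one h16 hψ (key (b + 1) ?_) ?_
    · rw [map_add, h.map_one, hu]; abel
    · intro s hs
      rw [add_mul, hr, one_mul] at hs
      have hv : v = (s - r) • 1 := by rw [sub_smul, ← hs]; abel
      -- with `v` and `b v` scalar, `b` is scalar as well, so that `u = b - φ b = 0`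
      have hu1 : (s - r) • u = 1 := by
        rw [← huv]; nth_rewrite 1 [hv]; simp
      have hb1 : (s - r) • b = r • 1 := by
        rw [← hr]; nth_rewrite 1 [hv]; simp
      have hb2 : (s - r) • φ b = r • 1 := by
        rw [← map_smul, hb1, map_smul, h.map_one]
      rw [hu, smul_sub, hb1, hb2, sub_self] at hu1
      exact zero_ne_one hu1
  · push Not at hs
    exact exists_sepQuad_of_trace_one h16 hψ (key b rfl) hs

/-- A division algebra of degree four with an anti-automorphism contains a separable quadratic
extension of its centre. -/
theorem exists_sepQuad (h16 : finrank F D = 16) {φ : D →ₗ[F] D} (h : IsAnti φ) :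
    ∃ (θ : D) (p q : F), IsSepQuad θ p q := by
  obtain ⟨x, hns, hs⟩ := exists_separable (F := F) (D := D) (by omega)
  rcases degree_two_or_four h16 hns with h2 | h4
  · obtain ⟨p, q, hx⟩ := isSepQuad_of_separable h2 hns hs
    exact ⟨x, p, q, hx⟩
  have hcent : cent F (Algebra.adjoin F {x}) = Algebra.adjoin F {x} := by
    refine (Subalgebra.eq_of_le_of_finrank_eq (fun a ha => mem_cent.2 fun b hb =>
      adjoin_comm x b hb a ha) ?_).symm
    have := finrank_mul_finrank_cent (Algebra.adjoin F {x})
    rw [finrank_adjoin, h4] at this ⊢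
    omega
  obtain ⟨φ, h, hfix⟩ := h.adjust_comm _ (adjoin_comm (F := F) x)
  -- `φ ∘ φ` is conjugation by some `g`, which lies in `F(x)` because `φ` fixes `x`
  obtain ⟨g, hg, hgφ⟩ := skolem_noether (⊤ : Subalgebra F D)
    ((AlgHom.ofLinearMap (φ ∘ₗ φ) (by simp [h.map_one]) (fun s t => by simp [h.map_mul])).comp
      (⊤ : Subalgebra F D).val)
  have hgφ : ∀ t : D, g * t = φ (φ t) * g := fun t => hgφ ⟨t, trivial⟩
  have hgS : g ∈ Algebra.adjoin F {x} := by
    rw [← hcent]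
    refine mem_cent.2 fun s hs => ?_
    rw [hgφ, hfix s hs, hfix s hs]
  have hg2 : ∃ r : F, g * g = algebraMap F D r := by
    refine exists_of_comm fun t => ?_
    obtain ⟨s, rfl⟩ := h.surjective t
    have e := congrArg φ (hgφ s)
    rw [h.map_mul, h.map_mul, hfix g hgS] at e
    rw [mul_assoc g g, hgφ (φ s), ← mul_assoc g, ← e, mul_assoc]
  obtain ⟨c, hc⟩ := hg2
  by_cases hgs : ∃ r : F, g = r • 1
  · obtain ⟨r, hr⟩ := hgs
    refine exists_sepQuad_of_involution h16 h fun t => mul_right_cancel₀ hg ?_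
    rw [← hgφ, hr]
    simp
  · push Not at hgs
    have hd : (minpoly F g).natDegree = 2 := by
      have h2 : (minpoly F g).natDegree ≤ 2 := by
        have := Polynomial.natDegree_le_natDegree (minpoly.min F g
          (p := Polynomial.X ^ 2 - Polynomial.C c) (Polynomial.monic_X_pow_sub_C c two_ne_zero)
          (by simp [pow_two, hc]))
        rwa [Polynomial.natDegree_X_pow_sub_C] at this
      rcases degree_two_or_four h16 hgs with e | e <;> omega
    obtain ⟨p, q, hx⟩ := isSepQuad_of_separable hd hgs (isSeparable_of_mem_adjoin hs hgS)
    exact ⟨g, p, q, hx⟩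

end Anti

section Albert

variable {F D : Type*} [Field F] [Ring D] [IsDomain D] [Algebra F D] [FiniteDimensional F D]

omit [IsDomain D] [FiniteDimensional F D] in
lemma IsSepQuad.mem_cent_adjoin {θ z : D} {p q : F} (h : IsSepQuad θ p q) :
    z ∈ cent F (Algebra.adjoin F {θ}) ↔ θ * z = z * θ := by
  refine ⟨fun hz => mem_cent.1 hz θ (Algebra.self_mem_adjoin_singleton F θ), fun hz => ?_⟩
  refine mem_cent.2 fun g hg => ?_
  obtain ⟨a, b, rfl⟩ := (mem_adjoin_quad h.sq).1 hg
  simp [add_mul, mul_add, hz]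

variable [Algebra.IsCentral F D]

/-- The centralizer of `F(θ)` is a quaternion algebra over `F(θ)`; its canonical involution. -/
lemma IsSepQuad.exists_bar_cent (h16 : finrank F D = 16) {θ : D} {p q : F}
    (h : IsSepQuad θ p q) :
    ∃ bar : cent F (Algebra.adjoin F {θ}) →ₗ[F] cent F (Algebra.adjoin F {θ}),
      bar 1 = 1 ∧ (∀ x y, bar (x * y) = bar y * bar x) ∧ (∀ x, bar (bar x) = x) ∧
      (∀ x : cent F (Algebra.adjoin F {θ}), (x : D) + bar x ∈ Algebra.adjoin F {θ}) ∧
      (∀ x : cent F (Algebra.adjoin F {θ}), (x : D) * bar x ∈ Algebra.adjoin F {θ}) ∧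
      (∀ x : cent F (Algebra.adjoin F {θ}), (x : D) ∈ Algebra.adjoin F {θ} → bar x = x) := by
  let S := Algebra.adjoin F {θ}
  let C := cent F S
  let _ : Field S := fieldOfFiniteDimensional F S
  have hle : S ≤ C := fun a ha => mem_cent.2 fun b hb => adjoin_comm θ b hb a ha
  let _ : Algebra S C := (Subalgebra.inclusion hle).toRingHom.toAlgebra' fun s c =>
    Subtype.ext (mem_cent.1 c.2 s s.2)
  have hmap : ∀ s : S, ((algebraMap S C s : C) : D) = s := fun s => rfl
  have : IsScalarTower F S C := IsScalarTower.of_algebraMap_eq fun r => rfl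
  have : Module.Finite S C := Module.Finite.of_restrictScalars_finite F S C
  have : Algebra.IsCentral S C := by
    refine ⟨fun x hx => ?_⟩
    have hxS : (x : D) ∈ S := by
      rw [← cent_cent S]
      exact mem_cent.2 fun g hg => congrArg Subtype.val (Subalgebra.mem_center_iff.1 hx ⟨g, hg⟩)
    exact Algebra.mem_bot.2 ⟨⟨x, hxS⟩, rfl⟩
  have h4 : finrank S C = 4 := by
    have h1 : finrank F S * finrank F C = 16 := h16 ▸ finrank_mul_finrank_cent S
    have h2 := Module.finrank_mul_finrank F S C
    have h3 : finrank F S = 2 := h.finrank_adjoin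
    rw [h3] at h1 h2
    omega
  obtain ⟨bar, b1, b2, b3, b4, b5⟩ := exists_bar (F := S) (D := C) h4
  have hs1 : ∀ s : S, ((s • (1 : C) : C) : D) = s := fun s => by
    rw [← Algebra.algebraMap_eq_smul_one]; rfl
  refine ⟨bar.restrictScalars F, b1, b2, b3, fun x => ?_, fun x => ?_, fun x hx => ?_⟩
  · obtain ⟨t, ht⟩ := b4 x
    have := congrArg Subtype.val ht
    rw [hs1] at this
    change (x : D) + bar x = t at this
    change (x : D) + bar x ∈ S
    rw [this]; exact t.2
  · obtain ⟨t, ht⟩ := b5 x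
    have := congrArg Subtype.val ht
    rw [hs1] at this
    change (x : D) * bar x = t at this
    change (x : D) * bar x ∈ S
    rw [this]; exact t.2
  · have e : x = (⟨x, hx⟩ : S) • (1 : C) := Subtype.ext (hs1 ⟨x, hx⟩).symm
    change bar x = x
    rw [e, map_smul, b1]

/-- The anti-automorphism may be taken to restrict to the canonical involution on the centralizer
of `F(θ)`. -/
lemma IsSepQuad.exists_anti (h16 : finrank F D = 16) {θ : D} {p q : F}
    (h : IsSepQuad θ p q) {φ₀ : D →ₗ[F] D} (hφ₀ : IsAnti φ₀) :
    ∃ φ : D →ₗ[F] D, IsAnti φ ∧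
      (∀ x, θ * x = x * θ → θ * φ x = φ x * θ) ∧
      (∀ x, θ * x = x * θ → φ (φ x) = x) ∧
      (∀ x, θ * x = x * θ → x + φ x ∈ Algebra.adjoin F {θ}) ∧
      (∀ x, θ * x = x * θ → x * φ x ∈ Algebra.adjoin F {θ}) ∧
      (∀ x ∈ Algebra.adjoin F {θ}, φ x = x) := by
  obtain ⟨bar, b1, b2, b3, b4, b5, b6⟩ := h.exists_bar_cent h16
  obtain ⟨φ, hφ, e⟩ := hφ₀.adjust (cent F (Algebra.adjoin F {θ}))
    ((cent F (Algebra.adjoin F {θ})).val.toLinearMap ∘ₗ bar) (by simp [b1]) (by simp [b2])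
  have hbar : ∀ x (hx : θ * x = x * θ), φ x = bar ⟨x, h.mem_cent_adjoin.2 hx⟩ := fun x hx => by
    have := e (bar ⟨x, h.mem_cent_adjoin.2 hx⟩)
    simpa [b3] using this
  have hC : ∀ x, θ * x = x * θ → θ * φ x = φ x * θ := fun x hx => by
    rw [hbar x hx]; exact h.mem_cent_adjoin.1 (bar _).2
  refine ⟨φ, hφ, hC, fun x hx => ?_, fun x hx => ?_, fun x hx => ?_, fun x hx => ?_⟩
  · rw [hbar _ (hC x hx)]
    simp only [hbar x hx]
    exact congrArg Subtype.val (b3 _)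
  · rw [hbar x hx]; exact b4 ⟨x, h.mem_cent_adjoin.2 hx⟩
  · rw [hbar x hx]; exact b5 ⟨x, h.mem_cent_adjoin.2 hx⟩
  · have hx' : θ * x = x * θ :=
      adjoin_comm θ θ (Algebra.self_mem_adjoin_singleton F θ) x hx
    rw [hbar x hx', b6 ⟨x, h.mem_cent_adjoin.2 hx'⟩ hx]

/-- Conjugation by an element inducing the nontrivial automorphism of `F(θ)` commutes with the
canonical involution of the centralizer, because trace and norm are unique. -/
lemma IsSepQuad.conj_bar {θ y : D} {p q : F} (h : IsSepQuad θ p q) {φ : D →ₗ[F] D}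
    (hy : y ≠ 0) (hc : y * θ = (p • 1 - θ) * y)
    (ht : ∀ x, θ * x = x * θ → x + φ x ∈ Algebra.adjoin F {θ})
    (hn : ∀ x, θ * x = x * θ → x * φ x ∈ Algebra.adjoin F {θ})
    (hS : ∀ x ∈ Algebra.adjoin F {θ}, φ x = x)
    {c c' : D} (hcC : θ * c = c * θ) (hcC' : θ * c' = c' * θ) (hcc : c * y = y * c') :
    φ c * y = y * φ c' := by
  have hθy : θ * y = y * (p • 1 - θ) := by
    rw [mul_sub, hc, sub_mul, mul_smul_comm, smul_mul_assoc, mul_one, one_mul]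
    abel
  have hnorm : ∀ x ∈ Algebra.adjoin F {θ}, ∃ x' ∈ Algebra.adjoin F {θ}, x * y = y * x' := by
    intro x hx
    obtain ⟨a, b, rfl⟩ := (mem_adjoin_quad h.sq).1 hx
    refine ⟨a • 1 + b • (p • 1 - θ), (mem_adjoin_quad h.sq).2 ⟨a + b * p, -b, by module⟩, ?_⟩
    simp only [add_mul, mul_add, smul_mul_assoc, mul_smul_comm, one_mul, mul_one, hθy]
  have hnorm' : ∀ x ∈ Algebra.adjoin F {θ}, ∃ x' ∈ Algebra.adjoin F {θ}, y * x = x' * y := by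
    intro x hx
    obtain ⟨a, b, rfl⟩ := (mem_adjoin_quad h.sq).1 hx
    refine ⟨a • 1 + b • (p • 1 - θ), (mem_adjoin_quad h.sq).2 ⟨a + b * p, -b, by module⟩, ?_⟩
    simp only [add_mul, mul_add, smul_mul_assoc, mul_smul_comm, one_mul, mul_one, hc]
  have hcomS : ∀ x, θ * x = x * θ → ∀ s ∈ Algebra.adjoin F {θ}, s * x = x * s :=
    fun x hx => mem_cent.1 (h.mem_cent_adjoin.2 hx)
  obtain ⟨t₁, ht₁, e₁⟩ := hnorm _ (ht c hcC)
  obtain ⟨n₁, hn₁, e₂⟩ := hnorm _ (hn c hcC)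
  set t := c' + φ c' with htd
  set n := c' * φ c' with hnd
  have htS : t ∈ Algebra.adjoin F {θ} := ht c' hcC'
  have hnS : n ∈ Algebra.adjoin F {θ} := hn c' hcC'
  have q1 : c' * c' = c' * t - n := by rw [htd, hnd]; noncomm_ring
  have q2 : c' * c' = c' * t₁ - n₁ := by
    refine mul_left_cancel₀ hy ?_
    calc y * (c' * c') = c * c * y := by rw [← mul_assoc, ← hcc, mul_assoc, ← hcc, mul_assoc]
      _ = c * ((c + φ c) * y) - c * φ c * y := by noncomm_ring
      _ = c * y * t₁ - y * n₁ := by rw [e₁, e₂, mul_assoc]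
      _ = y * (c' * t₁ - n₁) := by rw [hcc]; noncomm_ring
  by_cases htt : t - t₁ = 0
  · have : t = t₁ := sub_eq_zero.1 htt
    have e3 : φ c' = t₁ - c' := by rw [← this, htd]; abel
    rw [e3, mul_sub, ← e₁, ← hcc]
    noncomm_ring
  · have hdiff : c' * (t - t₁) = n - n₁ := by
      rw [mul_sub]
      have := q1.symm.trans q2
      rw [sub_eq_iff_eq_add] at this
      rw [this]; abel
    have hdS : t - t₁ ∈ Algebra.adjoin F {θ} := sub_mem htS ht₁
    have hc'S : c' ∈ Algebra.adjoin F {θ} := by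
      rw [← cent_cent (Algebra.adjoin F {θ})]
      refine mem_cent.2 fun g hg => ?_
      have hg' := mem_cent.1 hg
      refine mul_right_cancel₀ htt ?_
      calc g * c' * (t - t₁) = g * (n - n₁) := by rw [mul_assoc, hdiff]
        _ = (n - n₁) * g := (hg' _ (sub_mem hnS hn₁)).symm
        _ = c' * ((t - t₁) * g) := by rw [← hdiff, mul_assoc]
        _ = c' * g * (t - t₁) := by rw [hg' _ hdS, mul_assoc]
    obtain ⟨x', hx', ex⟩ := hnorm' c' hc'S
    have : c = x' := mul_right_cancel₀ hy (hcc.trans ex)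
    rw [hS c' hc'S, hS c (this ▸ hx'), hcc]

/-- If `θ` generates a separable quadratic extension, some `y` with `y θ = (p - θ) y` has scalar
square: symmetrising an arbitrary such `y` under the adjusted anti-automorphism works. -/
theorem IsSepQuad.exists_quatPair (h16 : finrank F D = 16) {θ : D} {p q : F}
    (h : IsSepQuad θ p q) {φ₀ : D →ₗ[F] D} (hφ₀ : IsAnti φ₀) :
    ∃ (y : D) (r : F), IsQuatPair θ y p q r := by
  obtain ⟨φ, hφ, hC, hinv, ht, hn, hS⟩ := h.exists_anti h16 hφ₀
  obtain ⟨y, hy, hc⟩ := h.exists_conj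
  obtain ⟨v, hyv, hvy⟩ := exists_inverse F hy
  have hφc : φ y * θ = (p • 1 - θ) * φ y := by
    have := congrArg φ hc
    rw [hφ.map_mul, hφ.map_mul, map_sub, map_smul, hφ.map_one,
      hS θ (Algebra.self_mem_adjoin_singleton F θ)] at this
    rw [sub_mul, this, mul_sub, smul_mul_assoc, mul_smul_comm, mul_one, one_mul]
    abel
  have hconjC : ∀ c, θ * c = c * θ → ∃ c', θ * c' = c' * θ ∧ c * y = y * c' := by
    intro c hcθ
    refine ⟨v * c * y, mul_left_cancel₀ hy ?_, ?_⟩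
    · have hcp : (p • 1 - θ) * c = c * (p • 1 - θ) := by simp [sub_mul, mul_sub, hcθ]
      calc y * (θ * (v * c * y)) = (y * θ) * v * c * y := by noncomm_ring
        _ = (p • 1 - θ) * (y * v) * c * y := by rw [hc]; noncomm_ring
        _ = c * ((p • 1 - θ) * y) := by rw [hyv, mul_one, hcp, mul_assoc]
        _ = (y * v) * c * (y * θ) := by rw [hyv, hc, one_mul]
        _ = _ := by noncomm_ring
    · calc c * y = (y * v) * c * y := by rw [hyv, one_mul]
        _ = _ := by noncomm_ring
  have heS : y * φ y ∈ Algebra.adjoin F {θ} := by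
    rw [← cent_cent (Algebra.adjoin F {θ})]
    refine mem_cent.2 fun g hg => ?_
    have hgC := h.mem_cent_adjoin.1 hg
    obtain ⟨c', hc', e⟩ := hconjC _ (hC g hgC)
    have e1 := h.conj_bar hy hc ht hn hS (hC g hgC) hc' e
    have e2 := congrArg φ e
    rw [hφ.map_mul, hφ.map_mul, hinv g hgC] at e2
    rw [hinv g hgC] at e1
    rw [← mul_assoc, e1, mul_assoc, ← e2, mul_assoc]
  have heT : φ y * y ∈ Algebra.adjoin F {θ} := by
    obtain ⟨a, b, hab⟩ := (mem_adjoin_quad h.sq).1 heS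
    have hθy : θ * y = y * (p • 1 - θ) := by
      rw [mul_sub, hc, sub_mul, mul_smul_comm, smul_mul_assoc, mul_one, one_mul]
      abel
    have : φ y * y = a • 1 + b • (p • 1 - θ) := by
      refine mul_left_cancel₀ hy ?_
      rw [← mul_assoc, hab]
      simp only [add_mul, mul_add, smul_mul_assoc, mul_smul_comm, one_mul, mul_one, hθy]
    exact (mem_adjoin_quad h.sq).2 ⟨a + b * p, -b, by rw [this]; module⟩
  by_cases h0 : y + φ y = 0
  · have e : φ y = -y := eq_neg_of_add_eq_zero_right h0
    refine ⟨y, h.quatPair hy hc ?_⟩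
    rw [e, mul_neg] at heS
    simpa using neg_mem heS
  · refine ⟨y + φ y, h.quatPair h0 (by rw [add_mul, mul_add, hc, hφc]) ?_⟩
    have e : (y + φ y) * (y + φ y) = (y * y + φ (y * y)) + y * φ y + φ y * y := by
      rw [hφ.map_mul]; noncomm_ring
    rw [e]
    exact add_mem (add_mem (ht _ (comm_of_conj_of_conj hc hc)) heS) heT

/-- Albert's theorem: a central division algebra of degree four with an anti-automorphism
contains a quaternion subalgebra, hence is a tensor product of two quaternion algebras. -/
theorem albert (h16 : finrank F D = 16) {φ : D →ₗ[F] D} (hφ : IsAnti φ) :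
    ∃ S : Subalgebra F D, finrank F S = 4 ∧ Algebra.IsCentral F S := by
  obtain ⟨θ, p, q, h⟩ := exists_sepQuad h16 hφ
  obtain ⟨y, r, hy⟩ := h.exists_quatPair h16 hφ
  exact hy.exists_subalgebra

end Albert

/-! ### Degree eight -/

section Eight

lemma exists_anti_of_equiv {F D : Type*} [Field F] [Ring D] [Algebra F D]
    (e : D ≃ₐ[F] Dᵐᵒᵖ) : ∃ φ : D →ₗ[F] D, IsAnti φ :=
  ⟨(MulOpposite.opLinearEquiv F).symm.toLinearMap ∘ₗ e.toLinearMap, by simp, by simp⟩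

lemma isSimpleRing_of_isDomain (F : Type*) {D : Type*} [Field F] [Ring D] [IsDomain D]
    [Algebra F D] [FiniteDimensional F D] : IsSimpleRing D := by
  let _ : DivisionRing D := divisionRingOfFiniteDimensional F D
  infer_instance

variable {F D : Type*} [Field F] [Ring D] [IsDomain D] [Algebra F D] [FiniteDimensional F D]
  [Algebra.IsCentral F D]

/-- The anti-automorphism of `D` can be arranged to preserve the quaternion algebra `cent F S`,
hence also its centralizer `S`. -/
lemma exists_anti_restrict {S : Subalgebra F D} (hS : Algebra.IsCentral F S)
    (h4 : finrank F (cent F S) = 4) {φ₀ : D →ₗ[F] D} (hφ₀ : IsAnti φ₀) :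
    ∃ φ : S →ₗ[F] S, IsAnti φ := by
  have := isCentral_cent S hS
  obtain ⟨bar, b1, b2, b3, -, -⟩ := exists_bar h4
  obtain ⟨φ, hφ, e⟩ := hφ₀.adjust (cent F S) ((cent F S).val.toLinearMap ∘ₗ bar) (by simp [b1])
    (by simp [b2])
  have hφS : ∀ s ∈ S, φ s ∈ S := by
    intro s hs
    rw [← cent_cent S]
    refine mem_cent.2 fun g hg => ?_
    have h1 := mem_cent.1 (bar ⟨g, hg⟩).2 s hs
    have h2 := congrArg φ h1
    have h3 : φ (bar ⟨g, hg⟩) = g := e ⟨g, hg⟩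
    rw [hφ.map_mul, hφ.map_mul, h3] at h2
    exact h2
  refine ⟨φ.restrict (p := Subalgebra.toSubmodule S) (q := Subalgebra.toSubmodule S) hφS, ?_, ?_⟩
  · exact Subtype.ext hφ.map_one
  · exact fun x y => Subtype.ext (hφ.map_mul x y)

theorem exists_three_factors (h64 : finrank F D = 64) {φ : D →ₗ[F] D} (hφ : IsAnti φ)
    (S : Subalgebra F D) (hS : Algebra.IsCentral F S) (h16 : finrank F S = 16) :
    ∃ T : Subalgebra F S, Algebra.IsCentral F T ∧ finrank F T = 4 ∧
      Algebra.IsCentral F (cent F T) ∧ finrank F (cent F T) = 4 ∧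
      Algebra.IsCentral F (cent F S) ∧ finrank F (cent F S) = 4 ∧
      Nonempty (D ≃ₐ[F] (T ⊗[F] cent F T ⊗[F] cent F S)) := by
  have h4 : finrank F (cent F S) = 4 := by
    have := finrank_mul_finrank_cent S
    rw [h16] at this
    omega
  obtain ⟨φ₁, hφ₁⟩ := exists_anti_restrict hS h4 hφ
  obtain ⟨T, hT4, hT⟩ := albert h16 hφ₁
  have hT4' : finrank F (cent F T) = 4 := by
    have := finrank_mul_finrank_cent T
    rw [hT4] at this
    omega
  obtain ⟨e₁⟩ := tensor_cent_equiv T hT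
  obtain ⟨e₂⟩ := tensor_cent_equiv S hS
  exact ⟨T, hT, hT4, isCentral_cent T hT, hT4', isCentral_cent S hS, h4,
    ⟨e₂.symm.trans (Algebra.TensorProduct.congr e₁.symm AlgEquiv.refl)⟩⟩

end Eight

end AlbertDecomposition

/-- Let `A` be a central division algebra of degree 8 (dimension 64) over `F` with
`A ≅ Aᵒᵖ` (exponent 2).  Let `K ⊆ A` (given by an embedding `ι : K →ₐ[F] A`) be a
separable quadratic field extension of `F`, and let `B` be the centralizer of `K` in
`A`.  If `B` has a descent to `F` by a central simple `F`-algebra `B₀`, i.e. there is an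
`F`-algebra isomorphism `K ⊗[F] B₀ ≅ B` carrying `k ⊗ 1` to `ι k` (an isomorphism of
`K`-algebras), then `A` decomposes as a tensor product of three quaternion
`F`-algebras. -/
theorem decomposition_of_descent_of_centralizer
    (F : Type) [Field F]
    (A : Type) [DivisionRing A] [Algebra F A]
    (hcentral : Subalgebra.center F A = ⊥) (hdim : Module.finrank F A = 64)
    (hop : Nonempty (A ≃ₐ[F] Aᵐᵒᵖ))
    (K : Type) [Field K] [Algebra F K] [Algebra.IsSeparable F K]
    (hK : Module.finrank F K = 2)
    (ι : K →ₐ[F] A)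
    (hdesc : ∃ (B₀ : Type) (_ : Ring B₀) (_ : Algebra F B₀),
      Algebra.IsCentral F B₀ ∧ IsSimpleRing B₀ ∧
      ∃ ψ : (K ⊗[F] B₀) ≃ₐ[F] (Subalgebra.centralizer F (Set.range ι) : Subalgebra F A),
        ∀ k : K, (ψ (algebraMap K (K ⊗[F] B₀) k) : A) = ι k) :
    ∃ (Q₁ Q₂ Q₃ : Type) (_ : Ring Q₁) (_ : Algebra F Q₁) (_ : Ring Q₂) (_ : Algebra F Q₂)
      (_ : Ring Q₃) (_ : Algebra F Q₃),
      IsQuaternionAlgebra F Q₁ ∧ IsQuaternionAlgebra F Q₂ ∧ IsQuaternionAlgebra F Q₃ ∧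
      Nonempty (A ≃ₐ[F] (Q₁ ⊗[F] Q₂ ⊗[F] Q₃)) := by
  have : FiniteDimensional F A := FiniteDimensional.of_finrank_pos (by omega)
  have : Algebra.IsCentral F A := ⟨hcentral.le⟩
  obtain ⟨e⟩ := hop
  obtain ⟨φ, hφ⟩ := AlbertDecomposition.exists_anti_of_equiv e
  obtain ⟨B₀, _, _, hB₀, _, ψ, -⟩ := hdesc
  have : FiniteDimensional F K := FiniteDimensional.of_finrank_pos (by omega)
  let j : B₀ →ₐ[F] A := (Subalgebra.val _).comp
    (ψ.toAlgHom.comp (Algebra.TensorProduct.includeRight : B₀ →ₐ[F] K ⊗[F] B₀))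
  have hj : Function.Injective j := Subtype.val_injective.comp (ψ.injective.comp
    (Algebra.TensorProduct.includeRight_injective (algebraMap F K).injective))
  let eB : B₀ ≃ₐ[F] j.range := AlgEquiv.ofInjective j hj
  have hcent : Algebra.IsCentral F j.range := Algebra.IsCentral.of_algEquiv F B₀ _ eB
  have hdimB : Module.finrank F j.range = 16 := by
    rw [← eB.toLinearEquiv.finrank_eq]
    have h1 := AlbertDecomposition.finrank_mul_finrank_cent ι.range
    have h2 : Module.finrank F ι.range = 2 := by
      rw [← (AlgEquiv.ofInjective ι ι.toRingHom.injective).toLinearEquiv.finrank_eq, hK]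
    have h3 := ψ.toLinearEquiv.finrank_eq
    rw [Module.finrank_tensorProduct, hK] at h3
    rw [h2, hdim, AlbertDecomposition.cent, AlgHom.coe_range, ← h3] at h1
    omega
  obtain ⟨T, t1, t2, t3, t4, t5, t6, ⟨f⟩⟩ :=
    AlbertDecomposition.exists_three_factors hdim hφ j.range hcent hdimB
  exact ⟨T, AlbertDecomposition.cent F T, AlbertDecomposition.cent F j.range, inferInstance,
    inferInstance, inferInstance, inferInstance, inferInstance, inferInstance,
    ⟨t1, AlbertDecomposition.isSimpleRing_of_isDomain F, t2⟩,
    ⟨t3, AlbertDecomposition.isSimpleRing_of_isDomain F, t4⟩,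
    ⟨t5, AlbertDecomposition.isSimpleRing_of_isDomain F, t6⟩, ⟨f⟩⟩
end

section
/- Let F be a field of characteristic 2, a ∈ F with a ∉ ℘(F), and K = F[α] with α² + α = a. Let A be a central simple F-algebra of dimension 64 that is isomorphic to its opposite algebra Aᵒᵖ (exponent dividing 2), containing K as a subfield, and let B be the centralizer of K in A. Then the following are equivalent: (i) there exist a′ ∈ F^× and a central simple F-algebra A′ of dimension 16 such that A ≅ [a, a′) ⊗_F A′ as F-algebras, where [a, a′) is the quaternion F-algebra with basis 1, u, v, uv subject to u² + u = a, v² = a′, v u = (u + 1) v; (ii) there exists an F-algebra B₀ such that B ≅ B₀ ⊗_F K as K-algebras. -/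
/-!
Both implications rest on the Skolem–Noether theorem `skolem_noether`, which is deduced here from
the simplicity of `B ⊗ Aᵒᵖ` (`isSimpleRing_tensorProduct`) and the fact that modules of equal
dimension over a simple algebra are isomorphic (`exists_equiv_of_finrank_eq`).

Suppose `A ≅ Q ⊗ A'` with `Q = [a, a')`. By Skolem–Noether the given copy of `K` in `A` is conjugate
to `F[u] ⊗ 1`, whose centralizer is `F[u] ⊗ A'`; hence `B ≅ K ⊗ A'`
(`descent_of_quaternion_factor`).

Conversely suppose `B ≅ K ⊗ B₀`, and let `σ` be the automorphism `α ↦ α + 1` of `K`. The algebra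
`K ⊗ B₀` is simple, being a centralizer (`isSimpleRing_centralizer`), so Skolem–Noether gives a unit
`w` of `A` which commutes with `B₀` and satisfies `w α = (α + 1) w`. The commutator with `α` is an
idempotent linear map on `A` with kernel `B` and image `B w`, so `A = B ⊕ B w`. It follows that `w²`
is central, i.e. equal to some `a' ∈ Fˣ`, and that `A` is free over `B₀` on `1, α, w, α w`; therefore
`A ≅ [a, a') ⊗ B₀` (`quaternion_factor_of_descent`). That `B₀` is simple and central of dimension 16
is inherited from `K ⊗ B₀` and from `A`.
-/

open scoped TensorProduct
open Module

/-! ### Central simple algebras -/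

/-- Every linear endomorphism of a central simple algebra is a sum of maps `x ↦ c * x * d`. This is
Jacobson density for `A` as a module over `A ⊗ Aᵒᵖ`: submodules are two-sided ideals, so it is
simple, and its endomorphism ring is the center `F`. -/
theorem exists_mulLeftRight_eq (F A : Type) [Field F] [Ring A] [Algebra F A]
    [Algebra.IsCentral F A] [IsSimpleRing A] [FiniteDimensional F A] (T : A →ₗ[F] A) :
    ∃ t : A ⊗[F] Aᵐᵒᵖ, AlgHom.mulLeftRight F A t = T := by
  let ρ := AlgHom.mulLeftRight F A
  let _ : Module (A ⊗[F] Aᵐᵒᵖ) A := Module.compHom A ρ.toRingHom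
  have smul_def (r : A ⊗[F] Aᵐᵒᵖ) (x : A) : r • x = ρ r x := rfl
  have hsimple : IsSimpleModule (A ⊗[F] Aᵐᵒᵖ) A := by
    refine (isSimpleModule_iff _ _).2 ⟨fun p ↦ ?_⟩
    let I : TwoSidedIdeal A := TwoSidedIdeal.mk' (p : Set A) p.zero_mem p.add_mem p.neg_mem
      (fun {x y} hy ↦ by
        have := p.smul_mem (x ⊗ₜ 1) hy
        simpa [smul_def, ρ, AlgHom.mulLeftRight_apply] using this)
      (fun {x y} hx ↦ by
        have := p.smul_mem (1 ⊗ₜ MulOpposite.op y) hx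
        simpa [smul_def, ρ, AlgHom.mulLeftRight_apply] using this)
    have hI (x : A) : x ∈ I ↔ x ∈ p := TwoSidedIdeal.mem_mk' ..
    rcases eq_bot_or_eq_top I with h | h
    · left
      rw [eq_bot_iff]
      intro x hx
      rw [← hI, h] at hx
      simpa using hx
    · right
      rw [eq_top_iff]
      intro x _
      rw [← hI, h]
      trivial
  -- `A ⊗ Aᵒᵖ`-linear endomorphisms of `A` are multiplications by scalars.
  have hend (g : End (A ⊗[F] Aᵐᵒᵖ) A) : ∃ c : F, ∀ x, g x = c • x := by
    have h1 (x : A) : g x = x * g 1 := by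
      have := g.map_smul (x ⊗ₜ 1) 1
      simpa [smul_def, ρ, AlgHom.mulLeftRight_apply] using this
    have h2 (x : A) : g x = g 1 * x := by
      have := g.map_smul (1 ⊗ₜ MulOpposite.op x) 1
      simpa [smul_def, ρ, AlgHom.mulLeftRight_apply] using this
    have hc : g 1 ∈ Subalgebra.center F A :=
      Subalgebra.mem_center_iff.2 fun x ↦ (h1 x).symm.trans (h2 x)
    obtain ⟨c, hc⟩ := (Algebra.IsCentral.mem_center_iff F).1 hc
    refine ⟨c, fun x ↦ ?_⟩
    rw [h2, hc, Algebra.smul_def]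
  let f : End (End (A ⊗[F] Aᵐᵒᵖ) A) A :=
    { toFun := T
      map_add' := T.map_add
      map_smul' := fun g x ↦ by
        obtain ⟨c, hc⟩ := hend g
        simp [hc] }
  let b := Module.finBasis F A
  classical
  obtain ⟨t, ht⟩ := jacobson_density f (Finset.univ.image b)
  refine ⟨t, b.ext fun i ↦ (ht (b i) (by simp)).symm⟩

/-- A nonzero two-sided ideal of `B ⊗ C` is stable under `1 ⊗ T` for every linear `T : C → C`, by
`exists_mulLeftRight_eq`. Taking for `T` a coordinate function produces a nonzero `b ⊗ 1` in the
ideal, and simplicity of `B` then produces `1`. -/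
theorem isSimpleRing_tensorProduct (F B C : Type) [Field F] [Ring B] [Algebra F B]
    [IsSimpleRing B] [Ring C] [Algebra F C] [Algebra.IsCentral F C] [IsSimpleRing C]
    [FiniteDimensional F C] : IsSimpleRing (B ⊗[F] C) := by
  refine IsSimpleRing.of_eq_bot_or_eq_top fun I ↦ or_iff_not_imp_left.2 fun hI ↦ ?_
  have hT (T : C →ₗ[F] C) {x : B ⊗[F] C} (hx : x ∈ I) : T.lTensor B x ∈ I := by
    obtain ⟨t, rfl⟩ := exists_mulLeftRight_eq F C T
    induction t with
    | zero => simp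
    | add t₁ t₂ h₁ h₂ =>
      simpa [LinearMap.lTensor_add] using I.add_mem h₁ h₂
    | tmul c d =>
      have (x : B ⊗[F] C) : (AlgHom.mulLeftRight F C (c ⊗ₜ d)).lTensor B x =
          (1 ⊗ₜ c) * x * (1 ⊗ₜ d.unop) := by
        induction x with
        | zero => simp
        | add x y hx hy => rw [map_add, hx, hy, mul_add, add_mul]
        | tmul y z => simp [AlgHom.mulLeftRight_apply]
      rw [this]
      exact I.mul_mem_right _ _ (I.mul_mem_left _ _ hx)
  obtain ⟨x, hxI, hx0⟩ : ∃ x ∈ I, x ≠ 0 := by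
    by_contra! h
    exact hI (eq_bot_iff.2 fun x hx ↦ by simpa using h x hx)
  let c := Module.finBasis F C
  obtain ⟨y, rfl⟩ := TensorProduct.eq_repr_basis_right c x
  obtain ⟨j, hj⟩ : ∃ j, y j ≠ 0 := by
    by_contra! h
    exact hx0 (by simp [show y = 0 from Finsupp.ext h])
  have key := hT ((LinearMap.toSpanSingleton F C 1).comp (c.coord j)) hxI
  have : y j ⊗ₜ[F] (1 : C) ∈ I := by
    convert key
    rw [Finsupp.sum_fintype _ _ (by simp), map_sum, Finset.sum_eq_single j]
    · simp
    · intro i _ hij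
      simp [Finsupp.single_eq_of_ne, hij.symm]
    · simp
  have h1 : (1 : B) ∈ I.comap (Algebra.TensorProduct.includeLeft : B →ₐ[F] B ⊗[F] C) :=
    IsSimpleRing.one_mem_of_ne_zero_mem _ hj (by simpa [TwoSidedIdeal.mem_comap] using this)
  rw [TwoSidedIdeal.mem_comap, map_one] at h1
  rw [eq_top_iff]
  intro z _
  simpa using I.mul_mem_left z _ h1

/-- Modules of the same dimension over a simple algebra are isomorphic, since both are multiples of
the unique simple module. -/
theorem exists_equiv_of_finrank_eq (F R M N : Type) [Field F] [Ring R] [Algebra F R]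
    [IsSimpleRing R] [FiniteDimensional F R]
    [AddCommGroup M] [Module F M] [Module R M] [IsScalarTower F R M] [FiniteDimensional F M]
    [AddCommGroup N] [Module F N] [Module R N] [IsScalarTower F R N] [FiniteDimensional F N]
    [Nontrivial M] [Nontrivial N] (h : finrank F M = finrank F N) :
    ∃ φ : M ≃+ N, ∀ (r : R) (x : M), φ (r • x) = r • φ x := by
  have : IsArtinianRing R := IsArtinianRing.of_finite F R
  have : Module.Finite R M := Module.Finite.of_restrictScalars_finite F R M
  have : Module.Finite R N := Module.Finite.of_restrictScalars_finite F R N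
  obtain ⟨m, _, S, _, ⟨eM⟩⟩ := (IsSimpleRing.isIsotypic R M).linearEquiv_fun
  obtain ⟨n, _, S', _, ⟨eN⟩⟩ := (IsSimpleRing.isIsotypic R N).linearEquiv_fun
  obtain ⟨I, ⟨e₁⟩⟩ := IsSemisimpleRing.exists_linearEquiv_ideal_of_isSimpleModule R S
  obtain ⟨J, ⟨e₂⟩⟩ := IsSemisimpleRing.exists_linearEquiv_ideal_of_isSimpleModule R S'
  have := IsSimpleModule.congr e₁.symm
  have := IsSimpleModule.congr e₂.symm
  obtain ⟨e₃⟩ := IsSimpleRing.isIsotypic R R J I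
  let e : S ≃ₗ[R] S' := e₁.trans (e₃.trans e₂.symm)
  have hM := (eM.restrictScalars F).finrank_eq
  have hN := (eN.restrictScalars F).finrank_eq
  have hS := (e.restrictScalars F).finrank_eq
  have : FiniteDimensional F S := Module.Finite.of_injective (S.subtype.restrictScalars F)
    S.subtype_injective
  have : Nontrivial S := IsSimpleModule.nontrivial R S
  have hpos : 0 < finrank F S := finrank_pos
  have : FiniteDimensional F S' := Module.Finite.of_injective (S'.subtype.restrictScalars F)
    S'.subtype_injective
  rw [Module.finrank_pi_fintype] at hM hN
  simp only [Finset.sum_const, Finset.card_univ, Fintype.card_fin, smul_eq_mul] at hM hN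
  have hmn : m = n := by
    rw [hM, hN, ← hS] at h
    exact Nat.eq_of_mul_eq_mul_right hpos h
  subst hmn
  let φ := eM.trans ((LinearEquiv.piCongrRight fun _ ↦ e).trans eN.symm)
  exact ⟨φ.toAddEquiv, φ.map_smul⟩

/-- The action of `B ⊗ Aᵒᵖ` on `A` by `(b ⊗ c) x = f b * x * c`, for a homomorphism `f : B → A`. -/
noncomputable def bimoduleAction {F A B : Type} [Field F] [Ring A] [Algebra F A]
    [Ring B] [Algebra F B] (f : B →ₐ[F] A) : B ⊗[F] Aᵐᵒᵖ →ₐ[F] End F A :=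
  (AlgHom.mulLeftRight F A).comp (Algebra.TensorProduct.map f (AlgHom.id F Aᵐᵒᵖ))

theorem bimoduleAction_tmul {F A B : Type} [Field F] [Ring A] [Algebra F A]
    [Ring B] [Algebra F B] (f : B →ₐ[F] A) (b : B) (c : Aᵐᵒᵖ) (x : A) :
    bimoduleAction f (b ⊗ₜ c) x = f b * x * c.unop := by
  simp [bimoduleAction, AlgHom.mulLeftRight_apply]

/-- Two representations of a simple algebra on the same space are equivalent. -/
theorem exists_intertwiner {F R V : Type} [Field F] [Ring R] [Algebra F R]
    [IsSimpleRing R] [FiniteDimensional F R] [AddCommGroup V] [Module F V]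
    [FiniteDimensional F V] [Nontrivial V] (ρ₁ ρ₂ : R →ₐ[F] End F V) :
    ∃ φ : V ≃+ V, ∀ r x, φ (ρ₁ r x) = ρ₂ r (φ x) := by
  let m₁ : Module R V := Module.compHom V ρ₁.toRingHom
  let m₂ : Module R V := Module.compHom V ρ₂.toRingHom
  have t₁ : @IsScalarTower F R V _ m₁.toSMul _ := by
    refine @IsScalarTower.mk _ _ _ _ m₁.toSMul _ fun c r x ↦ ?_
    change ρ₁ (c • r) x = c • ρ₁ r x
    simp
  have t₂ : @IsScalarTower F R V _ m₂.toSMul _ := by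
    refine @IsScalarTower.mk _ _ _ _ m₂.toSMul _ fun c r x ↦ ?_
    change ρ₂ (c • r) x = c • ρ₂ r x
    simp
  exact @exists_equiv_of_finrank_eq F R V V _ _ _ _ _ _ _ m₁ t₁ _ _ _ m₂ t₂ _ _ _ rfl

/-- The Skolem–Noether theorem. -/
theorem skolem_noether {F A B : Type} [Field F] [Ring A] [Algebra F A]
    [Algebra.IsCentral F A] [IsSimpleRing A] [FiniteDimensional F A]
    [Ring B] [Algebra F B] [IsSimpleRing B] [FiniteDimensional F B] (f g : B →ₐ[F] A) :
    ∃ w : Aˣ, ∀ b, w * f b = g b * w := by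
  have : Algebra.IsCentral F Aᵐᵒᵖ := inferInstance
  have : FiniteDimensional F Aᵐᵒᵖ := Module.Finite.equiv (MulOpposite.opLinearEquiv F)
  have := isSimpleRing_tensorProduct F B Aᵐᵒᵖ
  obtain ⟨φ, hφ⟩ := exists_intertwiner (bimoduleAction f) (bimoduleAction g)
  have h1 (x c : A) : φ (x * c) = φ x * c := by
    simpa [bimoduleAction_tmul] using hφ (1 ⊗ₜ MulOpposite.op c) x
  have h2 (b : B) (x : A) : φ (f b * x) = g b * φ x := by
    simpa [bimoduleAction_tmul] using hφ (b ⊗ₜ 1) x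
  have h3 : φ 1 * φ.symm 1 = 1 := by rw [← h1, one_mul, φ.apply_symm_apply]
  have h4 : φ.symm 1 * φ 1 = 1 := by
    apply φ.injective
    rw [h1, φ.apply_symm_apply, one_mul]
  refine ⟨⟨φ 1, φ.symm 1, h3, h4⟩, fun b ↦ ?_⟩
  change φ 1 * f b = g b * φ 1
  rw [← h1, one_mul, ← h2, mul_one]

/-- The endomorphism ring of a nonzero finite module over a simple Artinian ring is a matrix ring over
the division ring `End R S`, with `S` the simple module. -/
theorem isSimpleRing_end (R M : Type) [Ring R] [IsSimpleRing R] [IsArtinianRing R]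
    [AddCommGroup M] [Module R M] [Module.Finite R M] [Nontrivial M] :
    IsSimpleRing (End R M) := by
  obtain ⟨n, _, S, _, ⟨e⟩⟩ := (IsSimpleRing.isIsotypic R M).linearEquiv_fun
  classical
  let e₁ : End R M ≃+* Matrix (Fin n) (Fin n) (End R S) :=
    e.conjRingEquiv.trans (endVecRingEquivMatrixEnd ..)
  have : IsSimpleRing (Matrix (Fin n) (Fin n) (End R S)) := inferInstance
  exact IsSimpleRing.of_ringEquiv e₁.symm this

/-- The centralizer of a simple subalgebra of a central simple algebra is simple: it is the
endomorphism ring of `A` as a module over the simple ring `B ⊗ Aᵒᵖ`. -/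
theorem isSimpleRing_centralizer {F A B : Type} [Field F] [Ring A] [Algebra F A]
    [Algebra.IsCentral F A] [IsSimpleRing A] [FiniteDimensional F A]
    [Ring B] [Algebra F B] [IsSimpleRing B] [FiniteDimensional F B] (f : B →ₐ[F] A) :
    IsSimpleRing (Subalgebra.centralizer F (Set.range f)) := by
  have : FiniteDimensional F Aᵐᵒᵖ := Module.Finite.equiv (MulOpposite.opLinearEquiv F)
  have := isSimpleRing_tensorProduct F B Aᵐᵒᵖ
  let ρ := bimoduleAction f
  let _ : Module (B ⊗[F] Aᵐᵒᵖ) A := Module.compHom A ρ.toRingHom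
  have smul_def (r : B ⊗[F] Aᵐᵒᵖ) (x : A) : r • x = ρ r x := rfl
  have : IsScalarTower F (B ⊗[F] Aᵐᵒᵖ) A := ⟨fun c r x ↦ by simp [smul_def]⟩
  have : IsArtinianRing (B ⊗[F] Aᵐᵒᵖ) := IsArtinianRing.of_finite F _
  have : Module.Finite (B ⊗[F] Aᵐᵒᵖ) A := Module.Finite.of_restrictScalars_finite F _ A
  have := isSimpleRing_end (B ⊗[F] Aᵐᵒᵖ) A
  have h1 (g : End (B ⊗[F] Aᵐᵒᵖ) A) (x : A) : g x = g 1 * x := by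
    simpa [smul_def, ρ, bimoduleAction_tmul] using g.map_smul (1 ⊗ₜ MulOpposite.op x) 1
  have h2 (g : End (B ⊗[F] Aᵐᵒᵖ) A) (b : B) : f b * g 1 = g 1 * f b := by
    have := g.map_smul (b ⊗ₜ 1) 1
    rw [← h1]
    simpa [smul_def, ρ, bimoduleAction_tmul] using this.symm
  let θ : End (B ⊗[F] Aᵐᵒᵖ) A →+* Subalgebra.centralizer F (Set.range f) :=
    { toFun := fun g ↦ ⟨g 1, by
        rw [Subalgebra.mem_centralizer_iff]
        rintro _ ⟨b, rfl⟩
        exact h2 g b⟩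
      map_one' := rfl
      map_mul' := fun g g' ↦ Subtype.ext (h1 g (g' 1))
      map_zero' := rfl
      map_add' := fun g g' ↦ rfl }
  refine IsSimpleRing.of_surjective θ this fun y ↦ ?_
  have hy := Subalgebra.mem_centralizer_iff F |>.1 y.2
  refine ⟨{ toFun := fun x ↦ y * x, map_add' := mul_add _, map_smul' := fun r x ↦ ?_ },
    Subtype.ext (mul_one _)⟩
  simp only [smul_def, RingHom.id_apply]
  induction r with
  | zero => simp
  | add r r' h h' => simp only [map_add, LinearMap.add_apply, mul_add, h, h']
  | tmul b c =>
    simp only [ρ, bimoduleAction_tmul, ← mul_assoc, hy _ ⟨b, rfl⟩]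

/-- For a proper two-sided ideal `I` of `C`, the map `B ⊗ C → B ⊗ C ⧸ I` is injective by simplicity of
its source, so `I = 0`. -/
theorem isSimpleRing_right_of_tensorProduct (F B C : Type) [Field F] [Ring B] [Algebra F B]
    [Ring C] [Algebra F C] [IsSimpleRing (B ⊗[F] C)] : IsSimpleRing C := by
  have hnt : Nontrivial (B ⊗[F] C) := inferInstance
  have : Nontrivial C := by
    by_contra h
    rw [not_nontrivial_iff_subsingleton] at h
    exact not_subsingleton _ (inferInstance : Subsingleton (B ⊗[F] C))
  have : Nontrivial B := by
    by_contra h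
    rw [not_nontrivial_iff_subsingleton] at h
    exact not_subsingleton _ (inferInstance : Subsingleton (B ⊗[F] C))
  refine isSimpleRing_iff_isTwoSided_imp.2 ⟨inferInstance, fun I hI ↦ ?_⟩
  refine or_iff_not_imp_right.2 fun hI' ↦ ?_
  have : Nontrivial (C ⧸ I) := Ideal.Quotient.nontrivial_iff.2 hI'
  let m := Algebra.TensorProduct.map (AlgHom.id F B) (Ideal.Quotient.mkₐ F I)
  have hm : Function.Injective m := m.toRingHom.injective
  rw [eq_bot_iff]
  intro c hc
  have h1 : m (1 ⊗ₜ c) = 0 := by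
    have : Ideal.Quotient.mkₐ F I c = 0 := Ideal.Quotient.eq_zero_iff_mem.2 hc
    simp [m, this]
  have h2 : (Algebra.TensorProduct.includeRight : C →ₐ[F] B ⊗[F] C) c = 0 := by
    apply hm
    simpa using h1
  exact Algebra.TensorProduct.includeRight_injective (FaithfulSMul.algebraMap_injective F B)
    (h2.trans (map_zero _).symm)

/-! ### From a quaternion factor to a descent -/

theorem exists_eq_sum_basis_tmul {F M N : Type} [Field F] [AddCommGroup M] [Module F M]
    [AddCommGroup N] [Module F N] {n : ℕ} (b : Basis (Fin n) F M) (x : M ⊗[F] N) :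
    ∃ c : Fin n → N, x = ∑ i, b i ⊗ₜ c i := by
  obtain ⟨c, rfl⟩ := TensorProduct.eq_repr_basis_left b x
  exact ⟨c, Finsupp.sum_fintype _ _ (by simp)⟩

theorem eq_zero_of_sum_basis_tmul {F M N : Type} [Field F] [AddCommGroup M] [Module F M]
    [AddCommGroup N] [Module F N] {n : ℕ} (b : Basis (Fin n) F M) (c : Fin n → N)
    (h : ∑ i, b i ⊗ₜ[F] c i = 0) (i : Fin n) : c i = 0 := by
  have := TensorProduct.sum_tmul_basis_left_eq_zero b (Finsupp.equivFunOnFinite.symm c) (by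
    rw [Finsupp.sum_fintype _ _ (by simp)]
    simpa using h)
  simpa using DFunLike.congr_fun this i

/-- A root of `X² + X - a` in any `F`-algebra `S` determines a homomorphism `K = F[α] → S`. -/
theorem exists_algHom_of_root {F K S : Type} [Field F] [Field K] [Algebra F K]
    [Ring S] [Algebra F S] {a : F} {α : K} (hα : α ^ 2 + α = algebraMap F K a)
    (bK : Basis (Fin 2) F K) (hb0 : bK 0 = 1) (hb1 : bK 1 = α)
    (t : S) (ht : t * t + t = algebraMap F S a) : ∃ j : K →ₐ[F] S, j α = t := by
  let l : K →ₗ[F] S := bK.constr F ![1, t]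
  have l1 : l 1 = 1 := by
    rw [← hb0]; simp [l]
  have lα : l α = t := by
    rw [← hb1]; simp [l]
  have hαα : α * α = a • (1 : K) - α := by
    rw [← Algebra.algebraMap_eq_smul_one, ← hα]; ring
  have hαα' : t * t = a • (1 : S) - t := by
    rw [← Algebra.algebraMap_eq_smul_one, ← ht]; abel
  have hmul : (LinearMap.mul F K).compr₂ l = (LinearMap.mul F S).compl₁₂ l l := by
    refine bK.ext fun i ↦ bK.ext fun j ↦ ?_
    fin_cases i <;> fin_cases j <;> simp [hb0, hb1, l1, lα, hαα, hαα']
  exact ⟨AlgHom.ofLinearMap l l1 fun x y ↦ LinearMap.congr_fun₂ hmul x y, lα⟩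

theorem mem_centralizer_range_iff {F K S : Type} [Field F] [Field K] [Algebra F K]
    [Ring S] [Algebra F S] {α : K}
    (bK : Basis (Fin 2) F K) (hb0 : bK 0 = 1) (hb1 : bK 1 = α) (j : K →ₐ[F] S) (y : S) :
    y ∈ Subalgebra.centralizer F (Set.range j) ↔ j α * y = y * j α := by
  rw [Subalgebra.mem_centralizer_iff]
  refine ⟨fun h ↦ h _ ⟨α, rfl⟩, ?_⟩
  rintro h _ ⟨k, rfl⟩
  rw [← bK.sum_repr k, Fin.sum_univ_two, hb0, hb1]
  simp [add_mul, mul_add, h]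

/-- If `A ≅ Q ⊗ A'` with `Q = [a, a')`, then the centralizer of `K` in `A` is a copy of `K ⊗ A'`: up to
an inner automorphism `K` is embedded as `F[u] ⊗ 1`, and in coordinates with respect to
`1, u, v, uv` the centralizer of `u ⊗ 1` is `F[u] ⊗ A'`. -/
theorem descent_of_quaternion_factor {F K A : Type} [Field F] {a : F}
    [Field K] [Algebra F K] {α : K} (hα : α ^ 2 + α = algebraMap F K a)
    (bK : Basis (Fin 2) F K) (hb0 : bK 0 = 1) (hb1 : bK 1 = α)
    [Ring A] [Algebra F A] [Algebra.IsCentral F A] [IsSimpleRing A] [FiniteDimensional F A]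
    (ι : K →ₐ[F] A)
    {Q : Type} [Ring Q] [Algebra F Q] {A' : Type} [Ring A'] [Algebra F A']
    (u v : Q) (bQ : Basis (Fin 4) F Q) (h0 : bQ 0 = 1) (h1 : bQ 1 = u) (h2 : bQ 2 = v)
    (h3 : bQ 3 = u * v) (huu : u * u + u = algebraMap F Q a)
    (hvu : v * u = (u + 1) * v) (e : A ≃ₐ[F] Q ⊗[F] A') :
    ∃ ψ : (K ⊗[F] A') ≃ₐ[F] (Subalgebra.centralizer F (Set.range ι) : Subalgebra F A),
        ∀ k : K, (ψ (algebraMap K (K ⊗[F] A') k) : A) = ι k := by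
  have : FiniteDimensional F K := Module.Finite.of_basis bK
  obtain ⟨j, hj⟩ := exists_algHom_of_root hα bK hb0 hb1 u huu
  let θ : K ⊗[F] A' →ₐ[F] Q ⊗[F] A' := Algebra.TensorProduct.map j (AlgHom.id F A')
  let jA : K →ₐ[F] A :=
    (e.symm.toAlgHom.comp (Algebra.TensorProduct.includeLeft : Q →ₐ[F] Q ⊗[F] A')).comp j
  obtain ⟨w, hw⟩ := skolem_noether jA ι
  -- Conjugation by `w` carries the copy of `K` inside `Q` to the given one.
  let conj : A →ₐ[F] A := AlgHom.ofLinearMap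
    ((LinearMap.mulLeft F (w : A)).comp (LinearMap.mulRight F (↑w⁻¹ : A)))
    (by simp) (by intro x y; simp [mul_assoc])
  have hθ (c : Fin 2 → A') : θ (∑ i, bK i ⊗ₜ c i) = 1 ⊗ₜ c 0 + u ⊗ₜ c 1 := by
    simp [θ, Fin.sum_univ_two, hb0, hb1, hj]
  have hθα : e (jA α) = u ⊗ₜ 1 := by simp [jA, hj]
  have hια : ι α = w * (jA α * ↑w⁻¹) := by
    rw [← mul_assoc, hw, mul_assoc, Units.mul_inv, mul_one]
  have hcomm (y : A) : ι α * (w * (y * ↑w⁻¹)) = w * (y * ↑w⁻¹) * ι α ↔ jA α * y = y * jA α := by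
    rw [hια]
    have l1 : w * (jA α * ↑w⁻¹) * (w * (y * ↑w⁻¹)) = w * (jA α * y * ↑w⁻¹) := by simp [mul_assoc]
    have l2 : w * (y * ↑w⁻¹) * (w * (jA α * ↑w⁻¹)) = w * (y * jA α * ↑w⁻¹) := by simp [mul_assoc]
    rw [l1, l2, Units.mul_right_inj, Units.mul_left_inj]
  -- The centralizer of `u ⊗ 1` is the image of `K ⊗ A'`.
  have hcent (z : Q ⊗[F] A') : (u ⊗ₜ 1) * z = z * (u ⊗ₜ 1) ↔ ∃ x, θ x = z := by
    constructor
    · intro h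
      obtain ⟨c, rfl⟩ := exists_eq_sum_basis_tmul bQ z
      let d : Fin 4 → A' := ![0, 0, c 2, c 3]
      have hd : ∑ i, bQ i ⊗ₜ[F] d i = 0 := by
        have e1 : v * u = u * v + v := by rw [hvu, add_mul, one_mul]
        have e2 : u * v * u = u * (u * v) + u * v := by rw [mul_assoc u v u, e1, mul_add]
        simp only [Fin.sum_univ_four, h0, h1, h2, h3, mul_add, add_mul,
          Algebra.TensorProduct.tmul_mul_tmul, one_mul, mul_one, e1, e2,
          TensorProduct.add_tmul] at h
        rw [← sub_eq_zero] at h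
        simp only [d, Fin.sum_univ_four, h0, h1, h2, h3, Matrix.cons_val, TensorProduct.tmul_zero]
        refine Eq.trans ?_ (neg_eq_zero.2 h)
        abel
      have h2' := eq_zero_of_sum_basis_tmul bQ d hd 2
      have h3' := eq_zero_of_sum_basis_tmul bQ d hd 3
      refine ⟨∑ i, bK i ⊗ₜ ![c 0, c 1] i, ?_⟩
      rw [hθ, Fin.sum_univ_four]
      simp only [d, Matrix.cons_val] at h2' h3'
      simp [h0, h1, h2', h3']
    · rintro ⟨x, rfl⟩
      obtain ⟨c, rfl⟩ := exists_eq_sum_basis_tmul bK x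
      rw [hθ]
      simp [mul_add, add_mul]
  let Θ : K ⊗[F] A' →ₐ[F] A := conj.comp (e.symm.toAlgHom.comp θ)
  have hΘ (x) : Θ x = w * (e.symm (θ x) * ↑w⁻¹) := rfl
  have hmem (x) : Θ x ∈ Subalgebra.centralizer F (Set.range ι) := by
    rw [mem_centralizer_range_iff bK hb0 hb1, hΘ, hcomm, ← e.injective.eq_iff, map_mul, map_mul,
      hθα, e.apply_symm_apply, hcent]
    exact ⟨x, rfl⟩
  refine ⟨AlgEquiv.ofBijective (Θ.codRestrict _ hmem) ⟨?_, ?_⟩, fun k ↦ ?_⟩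
  · rw [AlgHom.injective_codRestrict, injective_iff_map_eq_zero]
    intro x hx
    have hx' : θ x = 0 := by
      rw [hΘ] at hx
      simpa using hx
    obtain ⟨c, rfl⟩ := exists_eq_sum_basis_tmul bK x
    rw [hθ] at hx'
    let d : Fin 4 → A' := ![c 0, c 1, 0, 0]
    have hd : ∑ i, bQ i ⊗ₜ[F] d i = 0 := by
      simpa [Fin.sum_univ_four, d, h0, h1] using hx'
    have h0' := eq_zero_of_sum_basis_tmul bQ d hd 0
    have h1' := eq_zero_of_sum_basis_tmul bQ d hd 1
    simp only [d, Matrix.cons_val] at h0' h1'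
    simp [Fin.sum_univ_two, h0', h1']
  · rintro ⟨y, hy⟩
    have hy' : y = w * ((↑w⁻¹ * y * w) * ↑w⁻¹) := by simp [mul_assoc]
    have h := (mem_centralizer_range_iff bK hb0 hb1 ι y).1 hy
    rw [hy', hcomm, ← e.injective.eq_iff, map_mul e (jA α), map_mul e _ (jA α), hθα, hcent] at h
    obtain ⟨x, hx⟩ := h
    refine ⟨x, Subtype.ext ?_⟩
    change Θ x = y
    rw [hΘ, hx, e.symm_apply_apply, ← hy']
  · change Θ (k ⊗ₜ 1) = ι k
    have : ι k = w * (jA k * ↑w⁻¹) := by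
      rw [← mul_assoc, hw, mul_assoc, Units.mul_inv, mul_one]
    rw [hΘ, this]
    simp [θ, jA]

/-! ### From a descent to a quaternion factor -/

theorem basisOneIJK_eq {F : Type} [Field F] (a b c : F) (i : Fin 4) :
    QuaternionAlgebra.basisOneIJK a b c i =
      ![⟨1, 0, 0, 0⟩, ⟨0, 1, 0, 0⟩, ⟨0, 0, 1, 0⟩, ⟨0, 0, 0, 1⟩] i := by
  apply (QuaternionAlgebra.basisOneIJK a b c).repr.injective
  rw [Basis.repr_self]
  ext j
  rw [QuaternionAlgebra.coe_basisOneIJK_repr]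
  fin_cases i <;> fin_cases j <;> simp

/-- If the centralizer of `K` in `A` is `K ⊗ B₀`, extend the nontrivial automorphism of `K` to the
automorphism `σ ⊗ 1` of `K ⊗ B₀` and realize it as conjugation by some `w ∈ Aˣ`. Then `α` and `w`
generate a quaternion algebra `[a, w²)`, and `A` is its tensor product with `B₀`. -/
theorem quaternion_factor_of_descent {F K A : Type} [Field F] [CharP F 2] {a : F}
    [Field K] [Algebra F K] {α : K} (hα : α ^ 2 + α = algebraMap F K a)
    (bK : Basis (Fin 2) F K) (hb0 : bK 0 = 1) (hb1 : bK 1 = α)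
    [Ring A] [Algebra F A] [Algebra.IsCentral F A] [IsSimpleRing A] [FiniteDimensional F A]
    (ι : K →ₐ[F] A) {B₀ : Type} [Ring B₀] [Algebra F B₀]
    (ψ : (K ⊗[F] B₀) ≃ₐ[F] (Subalgebra.centralizer F (Set.range ι) : Subalgebra F A))
    (hψ : ∀ k : K, (ψ (algebraMap K (K ⊗[F] B₀) k) : A) = ι k) :
    IsSimpleRing B₀ ∧ ∃ a' : F, a' ≠ 0 ∧
      Nonempty (A ≃ₐ[F] QuaternionAlgebra F a 1 a' ⊗[F] B₀) := by
  have : FiniteDimensional F K := Module.Finite.of_basis bK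
  have : CharP A 2 := charP_of_injective_algebraMap (algebraMap F A).injective 2
  have two (x : A) : x + x = 0 := CharTwo.add_self_eq_zero x
  have : IsSimpleRing (K ⊗[F] B₀) :=
    IsSimpleRing.of_ringEquiv ψ.symm.toRingEquiv (isSimpleRing_centralizer ι)
  have : FiniteDimensional F (K ⊗[F] B₀) := Module.Finite.equiv ψ.symm.toLinearEquiv
  refine ⟨isSimpleRing_right_of_tensorProduct F K B₀, ?_⟩
  let f : K ⊗[F] B₀ →ₐ[F] A := (Subalgebra.val _).comp ψ.toAlgHom
  have hf (k : K) : f (k ⊗ₜ 1) = ι k := hψ k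
  have hfinj : Function.Injective f := Subtype.val_injective.comp ψ.injective
  have hfsurj (y : A) (hy : ι α * y = y * ι α) : ∃ x, f x = y := by
    obtain ⟨x, hx⟩ := ψ.surjective ⟨y, (mem_centralizer_range_iff bK hb0 hb1 ι y).2 hy⟩
    exact ⟨x, congrArg Subtype.val hx⟩
  obtain ⟨σ, hσ⟩ := exists_algHom_of_root hα bK hb0 hb1 (α + 1) (by
    have : CharP K 2 := charP_of_injective_algebraMap (algebraMap F K).injective 2
    rw [← hα]
    have : (2 : K) = 0 := CharTwo.two_eq_zero
    linear_combination (α + 1) * this)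
  obtain ⟨w, hw⟩ := skolem_noether f (f.comp (Algebra.TensorProduct.map σ (AlgHom.id F B₀)))
  let β : B₀ →ₐ[F] A := f.comp Algebra.TensorProduct.includeRight
  have hβ (b : B₀) : β b = f (1 ⊗ₜ b) := rfl
  set s : A := ι α with hs
  have hws : w * s = s * w + w := by
    have := hw (α ⊗ₜ 1)
    rw [hf] at this
    rw [this]
    simp [hσ, hf, add_mul, hs]
  have hwβ (b : B₀) : w * β b = β b * w := by
    rw [hβ]
    simpa using hw (1 ⊗ₜ b)
  have hfαb (b : B₀) : f (α ⊗ₜ b) = s * β b := by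
    rw [hβ, hs, ← hf, ← map_mul, Algebra.TensorProduct.tmul_mul_tmul, mul_one, one_mul]
  have hsβ (b : B₀) : s * β b = β b * s := by
    rw [hβ, hs, ← hf, ← map_mul, ← map_mul]
    simp
  have hf2 (c : Fin 2 → B₀) : f (∑ i, bK i ⊗ₜ c i) = β (c 0) + s * β (c 1) := by
    rw [Fin.sum_univ_two, hb0, hb1, map_add, hfαb, hβ, hβ]
  have hss : s * s = algebraMap F A a + s := by
    have : s * s + s = algebraMap F A a := by
      rw [hs, ← map_mul, ← map_add, ← pow_two, hα, AlgHom.commutes]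
    rw [← this, add_assoc, two, add_zero]
  -- `A` decomposes into eigenspaces of `y ↦ s y + y s`, which are `C(s)` and `C(s) w`.
  have hdecomp (y : A) : ∃ y₀ y₁ : A, s * y₀ = y₀ * s ∧ s * y₁ = y₁ * s ∧ y = y₀ + y₁ * w := by
    obtain ⟨z, hz⟩ : ∃ z, z = s * y + y * s := ⟨_, rfl⟩
    have hz' : s * z = z * s + z := by
      have e1 : s * (s * y) = algebraMap F A a * y + s * y := by rw [← mul_assoc, hss, add_mul]
      have e2 : y * s * s = algebraMap F A a * y + y * s := by
        rw [mul_assoc, hss, mul_add, Algebra.commutes]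
      have e3 := two (y * s)
      rw [hz, mul_add, add_mul, e1, e2, ← mul_assoc s y s]
      rw [← sub_eq_zero, ← neg_eq_zero, ← e3]
      abel
    have hw' : s * ↑w⁻¹ = ↑w⁻¹ * s + ↑w⁻¹ := by
      have : w * (s * ↑w⁻¹) = w * (↑w⁻¹ * s + ↑w⁻¹) := by
        rw [← mul_assoc, hws, mul_add, Units.mul_inv_cancel_left, add_mul, mul_assoc,
          Units.mul_inv, mul_one]
      exact (Units.mul_right_inj w).1 this
    refine ⟨y + z, z * ↑w⁻¹, ?_, ?_, ?_⟩
    · have e1 : s * y = y * s + z := by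
        rw [hz, add_left_comm, two, add_zero]
      rw [mul_add, add_mul, hz', e1, ← sub_eq_zero, ← two z]
      abel
    · rw [← mul_assoc, hz', add_mul, mul_assoc z s, hw', mul_add, add_assoc, two, add_zero,
        mul_assoc]
    · rw [mul_assoc, Units.inv_mul, mul_one, add_assoc, two, add_zero]
  have hunique (y₀ y₁ : A) (h₀ : s * y₀ = y₀ * s) (h₁ : s * y₁ = y₁ * s)
      (h : y₀ + y₁ * w = 0) : y₀ = 0 ∧ y₁ = 0 := by
    have e : (y₀ + y₁ * w) * s - s * (y₀ + y₁ * w) = y₁ * w := by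
      rw [add_mul, mul_add, h₀, mul_assoc, hws, ← mul_assoc, h₁]
      noncomm_ring
    rw [h, zero_mul, mul_zero, sub_zero] at e
    have h1 : y₁ = 0 := by simpa using e.symm
    refine ⟨?_, h1⟩
    simpa [h1] using h
  have hβexp (y : A) (hy : s * y = y * s) : ∃ b c, y = β b + s * β c := by
    obtain ⟨x, rfl⟩ := hfsurj y hy
    obtain ⟨c, rfl⟩ := exists_eq_sum_basis_tmul bK x
    exact ⟨c 0, c 1, hf2 c⟩
  -- `w²` commutes with `s`, `w` and `β B₀`, which generate `A`.
  have hcentral : (w * w : A) ∈ Subalgebra.center F A := by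
    rw [Subalgebra.mem_center_iff]
    have cw : Commute (w * w : A) w := (mul_assoc _ _ _ : _ = (w : A) * (w * w))
    have cβ (b : B₀) : Commute (w * w : A) (β b) :=
      Commute.mul_left (hwβ b : Commute (w : A) (β b)) (hwβ b)
    have cs : Commute (w * w : A) s := by
      change w * w * s = s * (w * w)
      rw [mul_assoc, hws, mul_add, ← mul_assoc, hws, add_mul, add_assoc, two, add_zero, mul_assoc]
    intro y
    obtain ⟨y₀, y₁, h₀, h₁, rfl⟩ := hdecomp y
    obtain ⟨b₀, c₀, rfl⟩ := hβexp y₀ h₀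
    obtain ⟨b₁, c₁, rfl⟩ := hβexp y₁ h₁
    have c (b c) : Commute (w * w : A) (β b + s * β c) := (cβ b).add_right (cs.mul_right (cβ c))
    exact ((c b₀ c₀).add_right ((c b₁ c₁).mul_right cw)).symm
  obtain ⟨a', ha'⟩ := (Algebra.IsCentral.mem_center_iff F).1 hcentral
  refine ⟨a', ?_, ?_⟩
  · rintro rfl
    simp at ha'
  let qb : QuaternionAlgebra.Basis A a 1 a' :=
    { i := s
      j := w
      k := s * w
      i_mul_i := by rw [hss, Algebra.algebraMap_eq_smul_one, one_smul]
      j_mul_j := by rw [ha', Algebra.algebraMap_eq_smul_one]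
      i_mul_j := rfl
      j_mul_i := by
        rw [hws, one_smul, add_comm, CharTwo.sub_eq_add] }
  have hqb (q : QuaternionAlgebra F a 1 a') : qb.liftHom q =
      algebraMap F A q.re + q.imI • s + q.imJ • (w : A) + q.imK • (s * w) := rfl
  let θ : QuaternionAlgebra F a 1 a' ⊗[F] B₀ →ₐ[F] A :=
    Algebra.TensorProduct.lift qb.liftHom β (fun q b ↦ by
      rw [hqb]
      have c1 : Commute s (β b) := hsβ b
      have c2 : Commute (w : A) (β b) := hwβ b
      exact (((show Commute (algebraMap F A q.re) (β b) from Algebra.commutes _ _).add_left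
        (c1.smul_left _)).add_left (c2.smul_left _)).add_left ((c1.mul_left c2).smul_left _))
  let bQ := QuaternionAlgebra.basisOneIJK a (1 : F) a'
  have hθ (c : Fin 4 → B₀) : θ (∑ i, bQ i ⊗ₜ c i) =
      (β (c 0) + s * β (c 1)) + (β (c 2) + s * β (c 3)) * w := by
    simp only [Fin.sum_univ_four, bQ, basisOneIJK_eq, Matrix.cons_val, map_add, θ,
      Algebra.TensorProduct.lift_tmul, hqb]
    simp [add_mul, mul_assoc, hwβ, add_assoc]
  refine ⟨(AlgEquiv.ofBijective θ ⟨?_, fun y ↦ ?_⟩).symm⟩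
  · rw [injective_iff_map_eq_zero]
    intro x hx
    obtain ⟨c, rfl⟩ := exists_eq_sum_basis_tmul bQ x
    rw [hθ] at hx
    have hc (b c : B₀) : s * (β b + s * β c) = (β b + s * β c) * s := by
      rw [mul_add, add_mul, hsβ, mul_assoc, hsβ]
    obtain ⟨e0, e1⟩ := hunique _ _ (hc _ _) (hc _ _) hx
    have e0' := eq_zero_of_sum_basis_tmul bK ![c 0, c 1] (hfinj (by rw [hf2, map_zero]; exact e0))
    have e1' := eq_zero_of_sum_basis_tmul bK ![c 2, c 3] (hfinj (by rw [hf2, map_zero]; exact e1))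
    have h0 : c 0 = 0 := e0' 0
    have h1 : c 1 = 0 := e0' 1
    have h2 : c 2 = 0 := e1' 0
    have h3 : c 3 = 0 := e1' 1
    simp [Fin.sum_univ_four, h0, h1, h2, h3]
  · obtain ⟨y₀, y₁, h₀, h₁, rfl⟩ := hdecomp y
    obtain ⟨b₀, c₀, rfl⟩ := hβexp y₀ h₀
    obtain ⟨b₁, c₁, rfl⟩ := hβexp y₁ h₁
    exact ⟨∑ i, bQ i ⊗ₜ ![b₀, c₀, b₁, c₁] i, hθ _⟩


/-- Let `F` be a field of characteristic 2, `a ∈ F \ ℘(F)`, `K = F[α]` with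
`α² + α = a`.  Let `A` be a central simple `F`-algebra of dimension 64 with `A ≅ Aᵒᵖ`
(exponent dividing 2) containing `K` (via `ι : K →ₐ[F] A`), and let `B` be the
centralizer of `K` in `A`.  Then the following are equivalent:
(i) `A ≅ [a, a′) ⊗[F] A′` for some `a′ ∈ F^×` and central simple `F`-algebra `A′` of
dimension 16, where `[a, a′)` is the quaternion `F`-algebra with basis `1, u, v, uv`
subject to `u² + u = a`, `v² = a′`, `v u = (u + 1) v`;
(ii) `B` has a descent to `F`: there is an `F`-algebra `B₀` and an `F`-algebra
isomorphism `K ⊗[F] B₀ ≅ B` carrying `k ⊗ 1` to `ι k` (a `K`-algebra isomorphism). -/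
theorem quaternion_factor_iff_centralizer_descends
    (F : Type) [Field F] [CharP F 2] (a : F) (ha : ∀ x : F, x ^ 2 + x ≠ a)
    (K : Type) [Field K] [Algebra F K]
    (α : K) (hα : α ^ 2 + α = algebraMap F K a)
    (bK : Basis (Fin 2) F K) (hb0 : bK 0 = 1) (hb1 : bK 1 = α)
    (A : Type) [Ring A] [Algebra F A]
    [Algebra.IsCentral F A] [IsSimpleRing A]
    (hdim : Module.finrank F A = 64)
    (hop : Nonempty (A ≃ₐ[F] Aᵐᵒᵖ))
    (ι : K →ₐ[F] A) :
    -- (i) `A ≅ [a, a′) ⊗[F] A′`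
    (∃ (a' : F), a' ≠ 0 ∧
      ∃ (Q : Type) (_ : Ring Q) (_ : Algebra F Q) (A' : Type) (_ : Ring A')
        (_ : Algebra F A'),
        -- `Q` is the quaternion algebra `[a, a′)`: basis `1, u, v, uv` with the
        -- relations `u² + u = a`, `v² = a′`, `vu = (u+1)v`
        (∃ (u v : Q) (bQ : Basis (Fin 4) F Q),
          bQ 0 = 1 ∧ bQ 1 = u ∧ bQ 2 = v ∧ bQ 3 = u * v ∧
          u * u + u = algebraMap F Q a ∧ v * v = algebraMap F Q a' ∧
          v * u = (u + 1) * v) ∧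
        Algebra.IsCentral F A' ∧ IsSimpleRing A' ∧ Module.finrank F A' = 16 ∧
        Nonempty (A ≃ₐ[F] (Q ⊗[F] A'))) ↔
    -- (ii) the centralizer `B` of `K` in `A` has a descent to `F`
    (∃ (B₀ : Type) (_ : Ring B₀) (_ : Algebra F B₀),
      ∃ ψ : (K ⊗[F] B₀) ≃ₐ[F] (Subalgebra.centralizer F (Set.range ι) : Subalgebra F A),
        ∀ k : K, (ψ (algebraMap K (K ⊗[F] B₀) k) : A) = ι k) := by
  have : FiniteDimensional F A := FiniteDimensional.of_finrank_pos (by omega)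
  constructor
  · rintro ⟨a', -, Q, _, _, A', _, _, ⟨u, v, bQ, h0, h1, h2, h3, huu, -, hvu⟩, -, -, -, ⟨e⟩⟩
    exact ⟨A', _, _, descent_of_quaternion_factor hα bK hb0 hb1 ι u v bQ h0 h1 h2 h3 huu hvu e⟩
  · rintro ⟨B₀, _, _, ψ, hψ⟩
    obtain ⟨hB₀, a', ha', ⟨e⟩⟩ := quaternion_factor_of_descent hα bK hb0 hb1 ι ψ hψ
    have hcent : Algebra.IsCentral F (QuaternionAlgebra F a 1 a' ⊗[F] B₀) :=
      Algebra.IsCentral.of_algEquiv F _ _ e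
    have hfin := e.toLinearEquiv.finrank_eq
    rw [hdim, Module.finrank_tensorProduct, QuaternionAlgebra.finrank_eq_four] at hfin
    refine ⟨a', ha', QuaternionAlgebra F a 1 a', _, _, B₀, _, _,
      ⟨⟨0, 1, 0, 0⟩, ⟨0, 0, 1, 0⟩, QuaternionAlgebra.basisOneIJK a 1 a', basisOneIJK_eq _ _ _ 0,
        basisOneIJK_eq _ _ _ 1, basisOneIJK_eq _ _ _ 2, ?_, ?_, ?_, ?_⟩,
      Algebra.IsCentral.right_of_tensor_of_field F (QuaternionAlgebra F a 1 a') B₀,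
      hB₀, by omega, ⟨e⟩⟩
    · rw [basisOneIJK_eq]
      ext <;> simp
    · ext <;> simp
      exact CharTwo.add_self_eq_zero 1
    · ext <;> simp
    · ext <;> simp
      exact CharTwo.neg_eq 1
end
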